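/- arXiv:0711.4925 — 5 statements merged into one kernel-verified Lean document; each statement's English description precedes it below -/
import Mathlib

section
/- For every real A ≥ 1 and every real μ > 0, the series ∑_{k=1}^∞ (1 - k²/A²)₊^μ (which has only finitely many nonzero terms) is strictly smaller than (A/2)·B(1+μ, 1/2); equivalently, the function f_μ(A) := (A/2)·B(1+μ, 1/2) − ∑_{k=1}^∞ (1 - k²/A²)₊^μ is strictly positive on [1,∞). -/
/-!
The profile `h t = (1 - t²)₊ ^ μ` is continuous, antitone on `[0, ∞)` and vanishes for `t ≥ 1`.
The series is a right-endpoint Riemann sum with unit step for `∫₀^∞ h (x / A) dx`, so it is at most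
this integral; the inequality is strict because on the first cell `[0, 1]` the integrand exceeds
its right-endpoint value at every interior point (this is where `A ≥ 1` is used, guaranteeing that
`h (x / A)` is strictly decreasing on that cell). Finally the substitutions `x = A t` and `y = t²`
turn the integral into `(A / 2) ∫₀¹ y ^ (-1/2) (1 - y) ^ μ dy = (A / 2) B(1/2, 1 + μ)`.
-/

/-- Euler Beta function `B(a,b) = Γ(a)Γ(b)/Γ(a+b)`. -/
noncomputable def eulerBeta (a b : ℝ) : ℝ :=
  Real.Gamma a * Real.Gamma b / Real.Gamma (a + b)

open MeasureTheory Set in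
/-- The Beta integral `B(1/2, 1 + μ)`, written over `(0, ∞)` by means of the positive part. -/
lemma integral_rpow_mul_max_one_sub (μ : ℝ) (hμ : 0 < μ) :
    ∫ y in Ioi (0 : ℝ), y ^ (-(1 / 2) : ℝ) * (max (1 - y) 0) ^ μ = eulerBeta (1 + μ) (1 / 2) := by
  have h1 : eulerBeta (1 + μ) (1 / 2) = ProbabilityTheory.beta (1 / 2) (1 + μ) := by
    rw [eulerBeta, ProbabilityTheory.beta, add_comm (1 / 2 : ℝ), mul_comm]
  have h2 : Complex.betaIntegral ((1 / 2 : ℝ) : ℂ) ((1 + μ : ℝ) : ℂ) =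
      ((∫ y in (0 : ℝ)..1, y ^ (-(1 / 2) : ℝ) * (max (1 - y) 0) ^ μ : ℝ) : ℂ) := by
    rw [Complex.betaIntegral, ← intervalIntegral.integral_ofReal]
    refine intervalIntegral.integral_congr fun y hy => ?_
    rw [uIcc_of_le zero_le_one] at hy
    have hy1 : 0 ≤ 1 - y := sub_nonneg.2 hy.2
    simp only [max_eq_left hy1, Complex.ofReal_mul, Complex.ofReal_cpow hy.1,
      Complex.ofReal_cpow hy1]
    push_cast
    congr 2 <;> ring
  rw [h1, ProbabilityTheory.beta_eq_betaIntegralReal _ _ (by norm_num) (by linarith), h2,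
    Complex.ofReal_re, intervalIntegral.integral_of_le zero_le_one]
  refine setIntegral_eq_of_subset_of_forall_sdiff_eq_zero measurableSet_Ioi Ioc_subset_Ioi_self ?_
  rintro y ⟨hy0, hy1⟩
  have : 1 < y := by
    by_contra! h
    exact hy1 ⟨hy0, h⟩
  rw [max_eq_right (by linarith), Real.zero_rpow hμ.ne', mul_zero]

open MeasureTheory Set in
lemma integral_max_one_sub_sq_div_sq (A μ : ℝ) (hA : 0 < A) (hμ : 0 < μ) :
    ∫ x in Ioi (0 : ℝ), (max (1 - x ^ 2 / A ^ 2) 0) ^ μ = (A / 2) * eulerBeta (1 + μ) (1 / 2) := by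
  have h1 : ∫ x in Ioi (0 : ℝ), (max (1 - x ^ 2) 0) ^ μ = eulerBeta (1 + μ) (1 / 2) / 2 := by
    rw [← integral_rpow_mul_max_one_sub μ hμ, ← integral_comp_rpow_Ioi_of_pos
      (g := fun y : ℝ => y ^ (-(1 / 2) : ℝ) * (max (1 - y) 0) ^ μ) (zero_lt_two' ℝ),
      ← integral_div]
    refine setIntegral_congr_fun measurableSet_Ioi fun x hx => ?_
    have hx : 0 < x := hx
    have e : (x ^ (2 : ℝ)) ^ (-(1 / 2) : ℝ) = x⁻¹ := by
      rw [← Real.rpow_mul hx.le, ← Real.rpow_neg_one]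
      norm_num
    have e' : x ^ ((2 : ℝ) - 1) = x := by norm_num
    simp only [smul_eq_mul]
    rw [e, e', Real.rpow_two]
    field_simp
  have h2 := integral_comp_mul_left_Ioi (fun x : ℝ => (max (1 - x ^ 2) 0) ^ μ) 0 (inv_pos.2 hA)
  rw [mul_zero, h1, inv_inv, smul_eq_mul] at h2
  calc _ = ∫ x in Ioi (0 : ℝ), (max (1 - (A⁻¹ * x) ^ 2) 0) ^ μ := by
        congr 1 with x
        congr 3
        field_simp
    _ = _ := by rw [h2]; ring

open MeasureTheory Set in
/-- For `A ≥ 1` and `μ > 0`, the series `∑_{k=1}^∞ (1 - k²/A²)₊^μ` is strictly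
smaller than `(A/2)·B(1+μ, 1/2)`; equivalently
`f_μ(A) = (A/2)·B(1+μ,1/2) − ∑_{k=1}^∞ (1 - k²/A²)₊^μ > 0` on `[1,∞)`. -/
theorem tsum_one_sub_sq_pos_part_rpow_lt (A μ : ℝ) (hA : 1 ≤ A) (hμ : 0 < μ) :
    (∑' k : ℕ, (max (1 - ((k : ℝ) + 1) ^ 2 / A ^ 2) 0) ^ μ) <
      (A / 2) * eulerBeta (1 + μ) (1 / 2) := by
  have hA0 : 0 < A := by linarith
  rw [← integral_max_one_sub_sq_div_sq A μ hA0 hμ]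
  set G : ℝ → ℝ := fun x => (max (1 - x ^ 2 / A ^ 2) 0) ^ μ with hG
  have hcont : Continuous G := by
    have : Continuous fun x : ℝ => max (1 - x ^ 2 / A ^ 2) 0 := by fun_prop
    exact this.rpow_const fun _ => Or.inr hμ.le
  have hanti : AntitoneOn G (Ici 0) := by
    intro x hx y hy hxy
    have hx : 0 ≤ x := hx
    simp only [hG]
    gcongr
  have hzero : ∀ x, A ≤ x → G x = 0 := by
    intro x hx
    have : 1 ≤ x ^ 2 / A ^ 2 := by
      rw [one_le_div (by positivity)]
      gcongr
    simp only [hG]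
    rw [max_eq_right (by linarith), Real.zero_rpow hμ.ne']
  -- With `A ≤ m + 1` only the terms `k = 1, …, m + 1` can be nonzero; writing the number of terms
  -- as `m + 1` singles out the first one, which carries the strict inequality.
  obtain ⟨m, hm⟩ : ∃ m : ℕ, A ≤ (m : ℝ) + 1 :=
    ⟨⌈A⌉₊, (Nat.le_ceil A).trans (by linarith)⟩
  have hsum : (∑' k : ℕ, (max (1 - ((k : ℝ) + 1) ^ 2 / A ^ 2) 0) ^ μ) =
      ∑ k ∈ Finset.range (m + 1), G (k + 1) := by
    refine tsum_eq_sum fun k hk => hzero _ ?_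
    have : m + 1 ≤ k := by simpa using hk
    have : (m : ℝ) + 1 ≤ k := by exact_mod_cast this
    linarith
  have hint : ∫ x in Ioi (0 : ℝ), G x = ∫ x in (0 : ℝ)..(1 + m), G x := by
    rw [intervalIntegral.integral_of_le (by positivity)]
    refine setIntegral_eq_of_subset_of_forall_sdiff_eq_zero measurableSet_Ioi
      Ioc_subset_Ioi_self ?_
    rintro y ⟨hy0, hy1⟩
    refine hzero y ?_
    by_contra! h
    exact hy1 ⟨hy0, by linarith⟩
  have htail : ∑ k ∈ Finset.range m, G (1 + (k + 1 : ℕ)) ≤ ∫ x in (1 : ℝ)..(1 + m), G x :=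
    AntitoneOn.sum_le_integral (hanti.mono fun x hx => zero_le_one.trans hx.1)
  have hfirst : G 1 < ∫ x in (0 : ℝ)..1, G x := by
    have hlt : ∀ x ∈ Ico (0 : ℝ) 1, G 1 < G x := by
      intro x hx
      have h1 : x ^ 2 / A ^ 2 < 1 ^ 2 / A ^ 2 := by
        have := hx.1
        gcongr
        exact hx.2
      have h2 : (1 : ℝ) ^ 2 / A ^ 2 ≤ 1 := by
        rw [div_le_one (by positivity)]
        gcongr
      refine Real.rpow_lt_rpow (le_max_right _ _) ?_ hμ
      rw [max_eq_left (by linarith), max_eq_left (by linarith)]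
      linarith
    have := intervalIntegral.integral_lt_integral_of_continuousOn_of_le_of_exists_lt
      (zero_lt_one' ℝ) (continuousOn_const (c := G 1)) hcont.continuousOn
      (fun x hx => hanti (mem_Ici.2 hx.1.le) (mem_Ici.2 zero_le_one) hx.2)
      ⟨0, by simp, hlt 0 (by simp)⟩
    simpa using this
  rw [hsum, hint, Finset.sum_range_succ',
    ← intervalIntegral.integral_add_adjacent_intervals (hcont.intervalIntegrable 0 1)
      (hcont.intervalIntegrable 1 (1 + m))]
  have hshift : ∑ k ∈ Finset.range m, G (((k + 1 : ℕ) : ℝ) + 1) =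
      ∑ k ∈ Finset.range m, G (1 + (k + 1 : ℕ)) :=
    Finset.sum_congr rfl fun k _ => by rw [add_comm]
  rw [hshift, Nat.cast_zero, zero_add]
  linarith
end

section
/- For every real μ > 0, the function f_μ(A) := (A/2)·B(1+μ, 1/2) − ∑_{k=1}^∞ (1 - k²/A²)₊^μ tends to 1/2 as A → +∞. -/
/-!
Write `g x = (1 - x²)₊ ^ μ`. The substitution `y = x²` turns the Beta integral into
`∫₀^∞ g = B(1 + μ, 1/2) / 2`, so `f_μ(A)` is `∫₀^N g (x / A) dx - ∑_{k=1}^N g (k / A)` for any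
integer `N ≥ A`, and `f_μ(A) - 1/2` is the error of the trapezoidal rule with unit step, since
`g 0 = 1`.

Near `1` the function `g` need not be differentiable, so the sum is split at `m = ⌊c A⌋` with
`0 < c < 1`. On `[0, m]` the rescaled integrand is `C²` with second derivative `O(A⁻²)`, and the
classical trapezoidal error bound gives `O(A⁻¹)` (`exists_head_bound`). On `[m, N]` monotonicity
alone bounds the error by `g (m / A) / 2` (`tail_bound`). Hence
`limsup |f_μ(A) - 1/2| ≤ g c / 2`, and `g c → 0` as `c → 1`.
-/

open Filter

/-- The function `f_μ(A) = (A/2)·B(1+μ,1/2) − ∑_{k=1}^∞ (1 - k²/A²)₊^μ`. -/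
noncomputable def fMu (μ A : ℝ) : ℝ :=
  (A / 2) * eulerBeta (1 + μ) (1 / 2) -
    ∑' k : ℕ, (max (1 - ((k : ℝ) + 1) ^ 2 / A ^ 2) 0) ^ μ

open MeasureTheory Set

/-- The profile `x ↦ (1 - x²)₊ ^ μ` sampled by the sum in `fMu`. -/
noncomputable def bump (μ x : ℝ) : ℝ := (max (1 - x ^ 2) 0) ^ μ

lemma bump_nonneg (μ x : ℝ) : 0 ≤ bump μ x := Real.rpow_nonneg (le_max_right _ _) _

lemma bump_zero (μ : ℝ) : bump μ 0 = 1 := by simp [bump]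

lemma bump_eq_zero {μ x : ℝ} (hμ : 0 < μ) (hx : 1 ≤ x) : bump μ x = 0 := by
  have : 1 - x ^ 2 ≤ 0 := by nlinarith
  rw [bump, max_eq_right this, Real.zero_rpow hμ.ne']

lemma continuous_bump {μ : ℝ} (hμ : 0 < μ) : Continuous (bump μ) := by
  unfold bump
  exact Continuous.rpow_const (by fun_prop) (fun _ => Or.inr hμ.le)

lemma antitoneOn_bump {μ : ℝ} (hμ : 0 < μ) : AntitoneOn (bump μ) (Ici 0) := by
  intro x hx y _ hxy
  have hx' : (0 : ℝ) ≤ x := hx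
  refine Real.rpow_le_rpow (le_max_right _ _) (max_le_max ?_ le_rfl) hμ.le
  nlinarith

lemma contDiffOn_bump (μ : ℝ) : ContDiffOn ℝ 2 (bump μ) (Ioo (-1) 1) := by
  have hpos : ∀ x ∈ Ioo (-1 : ℝ) 1, 0 < 1 - x ^ 2 := fun x hx => by nlinarith [hx.1, hx.2]
  have h : ContDiffOn ℝ 2 (fun x : ℝ => (1 - x ^ 2) ^ μ) (Ioo (-1) 1) :=
    ContDiffOn.rpow_const_of_ne (by fun_prop) (fun x hx => (hpos x hx).ne')
  refine h.congr fun x hx => ?_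
  rw [bump, max_eq_left (hpos x hx).le]

/-- The substitution `y = x²` in Euler's integral for `B(1/2, 1 + μ)`. -/
lemma integral_bump {μ : ℝ} (hμ : 0 < μ) {b : ℝ} (hb : 1 ≤ b) :
    ∫ x in (0 : ℝ)..b, bump μ x = eulerBeta (1 + μ) (1 / 2) / 2 := by
  have h1 : eulerBeta (1 + μ) (1 / 2) =
      ∫ y in (0 : ℝ)..1, y ^ (-(1 / 2) : ℝ) * (max (1 - y) 0) ^ μ := by
    have e : eulerBeta (1 + μ) (1 / 2) = ProbabilityTheory.beta (1 / 2) (1 + μ) := by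
      rw [eulerBeta, ProbabilityTheory.beta, mul_comm, add_comm (1 / 2 : ℝ)]
    rw [e, ProbabilityTheory.beta_eq_betaIntegralReal _ _ (by norm_num) (by linarith),
      Complex.betaIntegral, ← Complex.ofReal_re (∫ y in (0 : ℝ)..1, _),
      ← intervalIntegral.integral_ofReal]
    congr 1
    refine intervalIntegral.integral_congr fun y hy => ?_
    rw [uIcc_of_le zero_le_one] at hy
    have hy1 : 0 ≤ 1 - y := by linarith [hy.2]
    rw [max_eq_left hy1, Complex.ofReal_mul, Complex.ofReal_cpow hy.1, Complex.ofReal_cpow hy1]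
    push_cast
    congr 2 <;> ring
  have h2 : ∫ y in (0 : ℝ)..1, y ^ (-(1 / 2) : ℝ) * (max (1 - y) 0) ^ μ =
      ∫ y in Ioi (0 : ℝ), y ^ (-(1 / 2) : ℝ) * (max (1 - y) 0) ^ μ := by
    rw [intervalIntegral.integral_of_le zero_le_one]
    refine (setIntegral_eq_of_subset_of_forall_sdiff_eq_zero measurableSet_Ioi
      Ioc_subset_Ioi_self fun y hy => ?_).symm
    have : 1 - y ≤ 0 := by
      by_contra! h
      exact hy.2 ⟨hy.1, by linarith⟩
    rw [max_eq_right this, Real.zero_rpow hμ.ne', mul_zero]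
  have h3 : ∫ x in (0 : ℝ)..b, bump μ x = ∫ x in Ioi (0 : ℝ), bump μ x := by
    rw [intervalIntegral.integral_of_le (by linarith)]
    refine (setIntegral_eq_of_subset_of_forall_sdiff_eq_zero measurableSet_Ioi
      Ioc_subset_Ioi_self fun y hy => bump_eq_zero hμ ?_).symm
    by_contra! h
    exact hy.2 ⟨hy.1, by linarith⟩
  have h4 : ∫ x in Ioi (0 : ℝ), 2 * bump μ x =
      ∫ y in Ioi (0 : ℝ), y ^ (-(1 / 2) : ℝ) * (max (1 - y) 0) ^ μ := by
    rw [← integral_comp_rpow_Ioi_of_pos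
      (g := fun y : ℝ => y ^ (-(1 / 2) : ℝ) * (max (1 - y) 0) ^ μ) (p := 2) two_pos]
    refine setIntegral_congr_fun measurableSet_Ioi fun x hx => ?_
    have hx' : (0 : ℝ) < x := hx
    have e : (x ^ (2 : ℝ)) ^ (-(1 / 2) : ℝ) = x⁻¹ := by
      rw [← Real.rpow_mul hx'.le, ← Real.rpow_neg_one]; norm_num
    simp only [smul_eq_mul]
    rw [e, bump, show (2 : ℝ) - 1 = 1 by norm_num, Real.rpow_one, Real.rpow_two]
    field_simp
  rw [integral_const_mul] at h4
  rw [h3, h1, h2, ← h4]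
  ring

/-- On `[0, m]` with `m ≤ c A` and `c < 1` the profile is `C²`, and the trapezoidal rule with step
`1 / A` has error `O(A⁻²)`; the scaling by `A` costs one power. -/
lemma exists_head_bound (μ : ℝ) {c : ℝ} (hc1 : c < 1) :
    ∃ M : ℝ, ∀ A : ℝ, 0 < A → ∀ m : ℕ, 0 < m → (m : ℝ) ≤ c * A →
      |A * (∫ x in (0 : ℝ)..m / A, bump μ x) -
        (∑ k ∈ Finset.range m, bump μ ((k + 1) / A) + 1 / 2 - bump μ (m / A) / 2)| ≤ M / A := by
  have hcont : ContinuousOn (iteratedDeriv 2 (bump μ)) (Icc 0 c) := by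
    have h := (contDiffOn_bump μ).continuousOn_iteratedDerivWithin (m := 2) le_rfl
      isOpen_Ioo.uniqueDiffOn
    refine (h.congr fun x hx => (iteratedDerivWithin_of_isOpen isOpen_Ioo hx).symm).mono ?_
    exact fun x hx => ⟨by linarith [hx.1], by linarith [hx.2]⟩
  obtain ⟨M, hM⟩ := isCompact_Icc.exists_bound_of_continuousOn hcont
  refine ⟨max M 0, fun A hA m hm hmc => ?_⟩
  have hm' : (0 : ℝ) < m := by exact_mod_cast hm
  have hmA : 0 < (m : ℝ) / A := by positivity
  have hmA' : (m : ℝ) / A ≤ c := by rwa [div_le_iff₀ hA]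
  have hsub : Icc (0 : ℝ) (m / A) ⊆ Ioo (-1) 1 :=
    fun x hx => ⟨by linarith [hx.1], by linarith [hx.2]⟩
  have htrap : |trapezoidal_error (bump μ) m 0 (m / A)| ≤
      |(m : ℝ) / A - 0| ^ 3 * max M 0 / (12 * (m : ℝ) ^ 2) := by
    refine trapezoidal_error_le_of_c2 ?_ (fun x => ?_) hm
    · rw [uIcc_of_le hmA.le]
      exact (contDiffOn_bump μ).mono hsub
    rw [uIcc_of_le hmA.le]
    by_cases hx : x ∈ Icc (0 : ℝ) (m / A)
    · rw [iteratedDerivWithin_eq_iteratedDeriv (uniqueDiffOn_Icc hmA)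
        ((contDiffOn_bump μ).contDiffAt (isOpen_Ioo.mem_nhds (hsub hx))) hx]
      exact (hM x ⟨hx.1, hx.2.trans hmA'⟩).trans (le_max_left _ _)
    · rw [iteratedDerivWithin_succ, derivWithin_zero_of_notMem_closure (by rwa [closure_Icc]),
        abs_zero]
      exact le_max_right _ _
  have hid : A * (∫ x in (0 : ℝ)..m / A, bump μ x) -
        (∑ k ∈ Finset.range m, bump μ ((k + 1) / A) + 1 / 2 - bump μ (m / A) / 2) =
      -(A * trapezoidal_error (bump μ) m 0 (m / A)) := by
    obtain ⟨n, rfl⟩ := Nat.exists_eq_succ_of_ne_zero hm.ne'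
    have hs : ∀ k : ℕ, (0 : ℝ) + (k + 1) * (((n.succ : ℕ) : ℝ) / A - 0) / ((n.succ : ℕ) : ℝ) =
        (k + 1) / A := fun k => by field_simp; ring
    rw [trapezoidal_error, trapezoidal_integral, Finset.sum_range_succ]
    simp only [hs, bump_zero, Nat.succ_sub_one]
    have : (((n.succ : ℕ) : ℝ) / A - 0) / ((n.succ : ℕ) : ℝ) = 1 / A := by field_simp; ring
    rw [this, Nat.cast_succ]
    field_simp
    ring
  rw [hid, abs_neg, abs_mul, abs_of_pos hA]
  calc A * |trapezoidal_error (bump μ) m 0 (m / A)|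
      ≤ A * (|(m : ℝ) / A - 0| ^ 3 * max M 0 / (12 * (m : ℝ) ^ 2)) := by gcongr
    _ = (m / A / 12) * (max M 0 / A) := by
        rw [sub_zero, abs_of_pos hmA]
        field_simp
    _ ≤ 1 * (max M 0 / A) := by
        gcongr
        linarith
    _ = max M 0 / A := one_mul _

/-- Beyond `m`, comparing the integral of a decreasing function with its left and right Riemann
sums leaves an error of at most half the total decrease. -/
lemma tail_bound {μ : ℝ} (hμ : 0 < μ) {A : ℝ} (hA : 0 < A) {m N : ℕ} (hmN : m ≤ N)
    (hN : A ≤ N) :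
    |A * (∫ x in (m / A : ℝ)..N / A, bump μ x) -
      (∑ k ∈ Finset.Ico m N, bump μ ((k + 1) / A)) - bump μ (m / A) / 2| ≤ bump μ (m / A) / 2 := by
  have hanti : AntitoneOn (fun x : ℝ => bump μ (x / A)) (Icc (m : ℝ) N) := by
    intro x hx y hy hxy
    have h0 : (0 : ℝ) ≤ m := m.cast_nonneg
    exact antitoneOn_bump hμ (div_nonneg (h0.trans hx.1) hA.le)
      (div_nonneg (h0.trans hy.1) hA.le) (by gcongr)
  have h1 := hanti.integral_le_sum_Ico hmN
  have h2 := hanti.sum_le_integral_Ico hmN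
  have h3 : ∑ k ∈ Finset.Ico m N, bump μ ((k : ℝ) / A) =
      ∑ k ∈ Finset.Ico m N, bump μ (((k + 1 : ℕ) : ℝ) / A) + bump μ (m / A) := by
    have h := Finset.sum_Ico_sub (fun k : ℕ => bump μ ((k : ℝ) / A)) hmN
    rw [Finset.sum_sub_distrib, bump_eq_zero hμ ((one_le_div hA).2 hN)] at h
    linarith
  rw [intervalIntegral.integral_comp_div _ hA.ne', smul_eq_mul] at h1 h2
  push_cast at h2 h3
  rw [abs_le]
  constructor <;> linarith

/-- For every `μ > 0`, `f_μ(A) → 1/2` as `A → +∞`. -/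
theorem tendsto_fMu_atTop (μ : ℝ) (hμ : 0 < μ) :
    Tendsto (fMu μ) atTop (nhds (1 / 2)) := by
  rw [Metric.tendsto_nhds]
  intro ε hε
  -- The split point is taken close enough to `1` that the tail contributes less than `ε`.
  obtain ⟨c, hc, hc0, hc1⟩ : ∃ c : ℝ, bump μ c < ε ∧ 0 < c ∧ c < 1 := by
    have h : ∀ᶠ x in nhdsWithin (1 : ℝ) (Iio 1), bump μ x < ε := by
      refine ((continuous_bump hμ).tendsto 1).mono_left nhdsWithin_le_nhds |>.eventually_lt_const ?_
      rwa [bump_eq_zero hμ le_rfl]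
    obtain ⟨c, h1, h2⟩ := (h.and (Ioo_mem_nhdsLT (zero_lt_one' ℝ))).exists
    exact ⟨c, h1, h2.1, h2.2⟩
  obtain ⟨M, hM⟩ := exists_head_bound μ hc1
  have hlim : Tendsto (fun A : ℝ => M / A + bump μ ((⌊c * A⌋₊ : ℝ) / A) / 2) atTop
      (nhds (0 + bump μ c / 2)) := by
    refine (tendsto_const_nhds.div_atTop tendsto_id).add (Tendsto.div_const ?_ _)
    exact ((continuous_bump hμ).tendsto c).comp (tendsto_nat_floor_mul_div_atTop hc0.le)
  have hlt : 0 + bump μ c / 2 < ε := by linarith [bump_nonneg μ c]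
  filter_upwards [hlim.eventually_lt_const hlt, eventually_gt_atTop 0,
    eventually_ge_atTop (1 / c)] with A hAε hA hAc
  refine lt_of_le_of_lt ?_ hAε
  have hcA : 1 ≤ c * A := by rwa [div_le_iff₀' hc0] at hAc
  set m := ⌊c * A⌋₊ with hm_def
  have hm : 0 < m := Nat.floor_pos.2 hcA
  have hmc : (m : ℝ) ≤ c * A := Nat.floor_le (by linarith)
  set N := ⌈A⌉₊ with hN_def
  have hN : A ≤ N := Nat.le_ceil A
  have hmN : m ≤ N := by
    have : (m : ℝ) ≤ N := by nlinarith
    exact_mod_cast this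
  have hhead := hM A hA m hm hmc
  have htail := tail_bound hμ hA hmN hN
  have hsum : ∑' k : ℕ, (max (1 - ((k : ℝ) + 1) ^ 2 / A ^ 2) 0) ^ μ =
      ∑ k ∈ Finset.range N, bump μ ((k + 1) / A) := by
    have e : ∀ k : ℕ, (max (1 - ((k : ℝ) + 1) ^ 2 / A ^ 2) 0) ^ μ = bump μ ((k + 1) / A) :=
      fun k => by rw [bump, div_pow]
    simp only [e]
    refine tsum_eq_sum fun k hk => bump_eq_zero hμ ?_
    have hk' : (N : ℝ) ≤ k := by simpa using hk
    rw [one_le_div hA]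
    linarith
  have hint : A / 2 * eulerBeta (1 + μ) (1 / 2) =
      A * (∫ x in (0 : ℝ)..m / A, bump μ x) + A * (∫ x in (m / A : ℝ)..N / A, bump μ x) := by
    rw [← mul_add, intervalIntegral.integral_add_adjacent_intervals
      ((continuous_bump hμ).intervalIntegrable _ _) ((continuous_bump hμ).intervalIntegrable _ _),
      integral_bump hμ ((one_le_div hA).2 hN)]
    ring
  rw [Real.dist_eq, fMu, hsum, hint, ← Finset.sum_range_add_sum_Ico _ hmN]
  rw [abs_le] at hhead htail ⊢
  constructor <;> linarith [hhead.1, hhead.2, htail.1, htail.2]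
end

section
/- For every real μ > 0 there exists a real ε_μ > 0, attained as the minimum of f_μ over [1, ∞) at some point A* ≥ 1, such that for every A ≥ 1 one has ∑_{k=1}^∞ (1 - k²/A²)₊^μ ≤ (A/2)·B(1+μ, 1/2) − ε_μ. -/
namespace EpsMu

open MeasureTheory Set Filter Topology

/-- The profile `g(x) = (1 - x²)₊^μ` of the Riesz mean. -/
noncomputable def bump (μ x : ℝ) : ℝ := (max (1 - x ^ 2) 0) ^ μ

/-- The un-normalised lattice sum `∑_{k ≥ 1} (t - k²)₊^μ`, which at `t = A²` equals `A^{2μ}` times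
the sum in `fMu`. -/
noncomputable def rieszSum (μ t : ℝ) : ℝ := ∑' k : ℕ, (max (t - ((k : ℝ) + 1) ^ 2) 0) ^ μ

/-! ### The profile and its integral -/

lemma bump_continuous {μ : ℝ} (hμ : 0 < μ) : Continuous (bump μ) := by
  unfold bump
  exact Continuous.rpow_const (by fun_prop) (fun x => Or.inr hμ.le)

lemma bump_nonneg (μ x : ℝ) : 0 ≤ bump μ x := Real.rpow_nonneg (le_max_right _ _) _

lemma bump_anti {μ : ℝ} (hμ : 0 < μ) {x y : ℝ} (hx : 0 ≤ x) (hxy : x ≤ y) :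
    bump μ y ≤ bump μ x := by
  unfold bump
  refine Real.rpow_le_rpow (le_max_right _ _) (max_le_max ?_ le_rfl) hμ.le
  nlinarith

lemma bump_eq_zero {μ : ℝ} (hμ : 0 < μ) {x : ℝ} (hx : 1 ≤ x) : bump μ x = 0 := by
  unfold bump
  rw [max_eq_right (by nlinarith), Real.zero_rpow hμ.ne']

lemma bump_zero (μ : ℝ) : bump μ 0 = 1 := by simp [bump]

lemma bump_lt_one {μ : ℝ} (hμ : 0 < μ) {x : ℝ} (hx : 0 < x) : bump μ x < 1 := by
  unfold bump
  refine Real.rpow_lt_one (le_max_right _ _) (max_lt ?_ one_pos) hμ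
  nlinarith [pow_pos hx 2]

/-- The substitution `y = x²` turns the Beta integral into the integral of the profile. -/
lemma integral_bump {μ : ℝ} (hμ : 0 < μ) :
    ∫ x in (0 : ℝ)..1, bump μ x = eulerBeta (1 + μ) (1 / 2) / 2 := by
  have h1 : eulerBeta (1 + μ) (1 / 2) = ∫ y in (0 : ℝ)..1, y ^ (-(1 / 2) : ℝ) * (1 - y) ^ μ := by
    have : eulerBeta (1 + μ) (1 / 2) = ProbabilityTheory.beta (1 / 2) (1 + μ) := by
      unfold eulerBeta ProbabilityTheory.beta
      rw [mul_comm, add_comm (1 + μ)]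
    rw [this, ProbabilityTheory.beta_eq_betaIntegralReal _ _ (by norm_num) (by linarith)]
    unfold Complex.betaIntegral
    have h2 : ∫ x in (0 : ℝ)..1, (x : ℂ) ^ (((1 / 2 : ℝ) : ℂ) - 1) *
        (1 - (x : ℂ)) ^ (((1 + μ : ℝ) : ℂ) - 1) =
        ∫ x in (0 : ℝ)..1, ((x ^ (-(1 / 2) : ℝ) * (1 - x) ^ μ : ℝ) : ℂ) := by
      refine intervalIntegral.integral_congr fun x hx => ?_
      rw [uIcc_of_le zero_le_one] at hx
      have e1 : (((1 / 2 : ℝ) : ℂ) - 1) = ((-(1 / 2) : ℝ) : ℂ) := by push_cast; ring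
      have e2 : (((1 + μ : ℝ) : ℂ) - 1) = ((μ : ℝ) : ℂ) := by push_cast; ring
      have e3 : (1 - (x : ℂ)) = ((1 - x : ℝ) : ℂ) := by push_cast; ring
      rw [e1, e2, e3, ← Complex.ofReal_cpow hx.1, ← Complex.ofReal_cpow (by linarith [hx.2])]
      push_cast; rfl
    rw [h2, intervalIntegral.integral_ofReal, Complex.ofReal_re]
  have h3 : ∫ y in (0 : ℝ)..1, y ^ (-(1 / 2) : ℝ) * (1 - y) ^ μ =
      ∫ y in Ioi (0 : ℝ), y ^ (-(1 / 2) : ℝ) * (max (1 - y) 0) ^ μ := by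
    rw [intervalIntegral.integral_of_le zero_le_one,
      setIntegral_eq_of_subset_of_forall_sdiff_eq_zero (s := Ioc (0 : ℝ) 1) (t := Ioi 0)
        measurableSet_Ioi (fun x hx => hx.1)]
    · refine setIntegral_congr_fun measurableSet_Ioc fun y hy => ?_
      rw [max_eq_left (by linarith [hy.2])]
    · intro y hy
      have : 1 < y := by
        by_contra h
        exact hy.2 ⟨hy.1, not_lt.1 h⟩
      rw [max_eq_right (by linarith), Real.zero_rpow hμ.ne', mul_zero]
  have h4 : ∫ x in (0 : ℝ)..1, bump μ x = ∫ x in Ioi (0 : ℝ), bump μ x := by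
    rw [intervalIntegral.integral_of_le zero_le_one,
      setIntegral_eq_of_subset_of_forall_sdiff_eq_zero (s := Ioc (0 : ℝ) 1) (t := Ioi 0)
        measurableSet_Ioi (fun x hx => hx.1)]
    intro y hy
    have : 1 < y := by
      by_contra h
      exact hy.2 ⟨hy.1, not_lt.1 h⟩
    exact bump_eq_zero hμ this.le
  rw [h1, h3, h4, ← integral_comp_rpow_Ioi (fun y => y ^ (-(1 / 2) : ℝ) * (max (1 - y) 0) ^ μ) two_ne_zero, eq_div_iff two_ne_zero,
    ← integral_mul_const]
  refine setIntegral_congr_fun measurableSet_Ioi fun x hx => ?_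
  have hx : 0 < x := hx
  have e1 : (x ^ (2 : ℝ)) ^ (-(1 / 2) : ℝ) = x⁻¹ := by
    rw [← Real.rpow_mul hx.le]
    norm_num [Real.rpow_neg_one]
  have e2 : x ^ ((2 : ℝ) - 1) = x := by norm_num
  simp only [smul_eq_mul]
  rw [e1, e2, abs_of_pos two_pos, Real.rpow_two]
  unfold bump
  field_simp

/-! ### Positivity and continuity of `f_μ` -/

lemma fMu_eq_tsum (μ A : ℝ) : fMu μ A =
    A / 2 * eulerBeta (1 + μ) (1 / 2) - ∑' k : ℕ, bump μ (((k : ℝ) + 1) / A) := by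
  simp only [fMu, bump, div_pow]

lemma tsum_bump_eq_sum {μ : ℝ} (hμ : 0 < μ) {A : ℝ} (hA : 0 < A) {N : ℕ} (hN : A ≤ N) :
    ∑' k : ℕ, bump μ (((k : ℝ) + 1) / A) = ∑ k ∈ Finset.range N, bump μ (((k : ℝ) + 1) / A) := by
  refine tsum_eq_sum fun k hk => bump_eq_zero hμ ?_
  rw [Finset.mem_range, not_lt] at hk
  have : (N : ℝ) ≤ k := by exact_mod_cast hk
  rw [le_div_iff₀ hA]
  linarith

/-- `f_μ(A)` is the sum over unit cells of the excess of the integral over the value at the right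
endpoint. -/
lemma fMu_eq_sum {μ : ℝ} (hμ : 0 < μ) {A : ℝ} (hA : 0 < A) {N : ℕ} (hN : A ≤ N) :
    fMu μ A = ∑ k ∈ Finset.range N,
      ((∫ x in (k : ℝ)..((k + 1 : ℕ) : ℝ), bump μ (x / A)) - bump μ (((k : ℝ) + 1) / A)) := by
  have hc : Continuous fun x => bump μ (x / A) := (bump_continuous hμ).comp (by fun_prop)
  rw [fMu_eq_tsum, tsum_bump_eq_sum hμ hA hN, Finset.sum_sub_distrib,
    intervalIntegral.sum_integral_adjacent_intervals (a := fun k : ℕ => (k : ℝ))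
      (fun k _ => hc.intervalIntegrable _ _)]
  congr 1
  rw [intervalIntegral.integral_comp_div _ hA.ne', ← intervalIntegral.integral_add_adjacent_intervals
    ((bump_continuous hμ).intervalIntegrable _ 1) ((bump_continuous hμ).intervalIntegrable 1 _)]
  simp only [Nat.cast_zero, zero_div]
  have h1 : (1 : ℝ) ≤ N / A := by rwa [one_le_div hA]
  have h0 : ∫ x in (1 : ℝ)..(N / A), bump μ x = 0 := by
    rw [intervalIntegral.integral_congr (g := fun _ => (0 : ℝ))]
    · simp
    · intro x hx
      rw [uIcc_of_le h1] at hx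
      exact bump_eq_zero hμ hx.1
  rw [h0, integral_bump hμ, smul_eq_mul]
  ring

lemma block_nonneg {μ : ℝ} (hμ : 0 < μ) {A : ℝ} (hA : 0 < A) (k : ℕ) :
    0 ≤ (∫ x in (k : ℝ)..((k + 1 : ℕ) : ℝ), bump μ (x / A)) - bump μ (((k : ℝ) + 1) / A) := by
  have hc : Continuous fun x => bump μ (x / A) := (bump_continuous hμ).comp (by fun_prop)
  have hk : (k : ℝ) ≤ ((k + 1 : ℕ) : ℝ) := by push_cast; linarith
  have := intervalIntegral.integral_mono_on hk
    (f := fun _ => bump μ (((k : ℝ) + 1) / A)) (g := fun x => bump μ (x / A))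
    (intervalIntegrable_const (μ := volume)) (hc.intervalIntegrable _ _) (fun x hx => by
      have h0 : 0 ≤ x := (Nat.cast_nonneg k).trans hx.1
      refine bump_anti hμ (div_nonneg h0 hA.le) ?_
      have := hx.2
      push_cast at this
      gcongr)
  simpa using this

lemma fMu_pos {μ : ℝ} (hμ : 0 < μ) {A : ℝ} (hA : 0 < A) : 0 < fMu μ A := by
  obtain ⟨N, hN⟩ := exists_nat_ge A
  have hN0 : 0 < N := by
    rw [← Nat.cast_pos (α := ℝ)]
    linarith
  rw [fMu_eq_sum hμ hA hN]
  refine Finset.sum_pos' (fun k _ => block_nonneg hμ hA k) ⟨0, Finset.mem_range.2 hN0, ?_⟩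
  have hc : Continuous fun x => bump μ (x / A) := (bump_continuous hμ).comp (by fun_prop)
  have := intervalIntegral.integral_lt_integral_of_continuousOn_of_le_of_exists_lt
    (f := fun _ => bump μ (1 / A)) (g := fun x => bump μ (x / A)) (zero_lt_one (α := ℝ))
    continuousOn_const hc.continuousOn
    (fun x hx => bump_anti hμ (div_nonneg hx.1.le hA.le) (by gcongr; exact hx.2))
    ⟨0, by simp, by simpa [bump_zero] using bump_lt_one hμ (inv_pos.2 hA)⟩
  simpa using this

lemma rieszSum_eq_sum {μ : ℝ} (hμ : 0 < μ) {t : ℝ} {N : ℕ} (hN : t ≤ N) :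
    rieszSum μ t = ∑ k ∈ Finset.range N, (max (t - ((k : ℝ) + 1) ^ 2) 0) ^ μ := by
  refine tsum_eq_sum fun k hk => ?_
  rw [Finset.mem_range, not_lt] at hk
  have : (N : ℝ) ≤ k := by exact_mod_cast hk
  rw [max_eq_right (by nlinarith [sq_nonneg (k : ℝ), (Nat.cast_nonneg k : (0 : ℝ) ≤ k)]),
    Real.zero_rpow hμ.ne']

lemma rieszSum_continuous {μ : ℝ} (hμ : 0 < μ) : Continuous (rieszSum μ) := by
  rw [continuous_iff_continuousAt]
  intro t
  obtain ⟨N, hN⟩ := exists_nat_gt t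
  have h : (fun t => ∑ k ∈ Finset.range N, (max (t - ((k : ℝ) + 1) ^ 2) 0) ^ μ)
      =ᶠ[𝓝 t] rieszSum μ := by
    filter_upwards [gt_mem_nhds hN] with s hs
    exact (rieszSum_eq_sum hμ hs.le).symm
  refine ContinuousAt.congr ?_ h
  refine Continuous.continuousAt ?_
  refine continuous_finsetSum _ fun k _ => ?_
  exact Continuous.rpow_const (by fun_prop) (fun x => Or.inr hμ.le)

lemma rieszSum_nonneg (μ t : ℝ) : 0 ≤ rieszSum μ t :=
  tsum_nonneg fun _ => Real.rpow_nonneg (le_max_right _ _) _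

lemma rieszSum_sq (μ : ℝ) {A : ℝ} (hA : 0 < A) :
    rieszSum μ (A ^ 2) = (A ^ 2) ^ μ * ∑' k : ℕ, bump μ (((k : ℝ) + 1) / A) := by
  unfold rieszSum bump
  rw [← tsum_mul_left]
  congr 1
  ext k
  rw [← Real.mul_rpow (by positivity) (le_max_right _ _), mul_max_of_nonneg _ _ (by positivity)]
  congr 2
  · field_simp
  · simp

lemma fMu_eq_rieszSum (μ : ℝ) {A : ℝ} (hA : 0 < A) : fMu μ A =
    A / 2 * eulerBeta (1 + μ) (1 / 2) - rieszSum μ (A ^ 2) / (A ^ 2) ^ μ := by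
  rw [fMu_eq_tsum, rieszSum_sq μ hA, mul_div_cancel_left₀]
  positivity

lemma fMu_continuousOn {μ : ℝ} (hμ : 0 < μ) : ContinuousOn (fMu μ) (Ici 1) := by
  have h : ContinuousOn (fun A : ℝ =>
      A / 2 * eulerBeta (1 + μ) (1 / 2) - rieszSum μ (A ^ 2) / (A ^ 2) ^ μ) (Ici 1) := by
    have h0 : ∀ A ∈ Ici (1 : ℝ), (A ^ 2) ^ μ ≠ 0 := fun A hA => by
      have : (0 : ℝ) < A := one_pos.trans_le hA
      positivity
    refine ContinuousOn.sub (by fun_prop) (ContinuousOn.div ?_ ?_ h0)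
    · exact ((rieszSum_continuous hμ).comp (by fun_prop)).continuousOn
    · exact (Continuous.rpow_const (by fun_prop) (fun x => Or.inr hμ.le)).continuousOn
  exact h.congr fun A hA => fMu_eq_rieszSum μ (one_pos.trans_le hA)

/-! ### Lower bound at infinity -/

/-- The trapezoidal rule, for a function whose derivative oscillates by at most `ε`: pairing `x`
with its reflection `p + q - x` and using the mean value theorem at both ends. -/
lemma trapezoid_le_integral {φ φ' : ℝ → ℝ} {p q ε : ℝ} (hpq : p < q)
    (hc : ContinuousOn φ (Icc p q)) (hd : ∀ x ∈ Ioo p q, HasDerivAt φ (φ' x) x)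
    (hε : ∀ x ∈ Icc p q, ∀ y ∈ Icc p q, |φ' x - φ' y| ≤ ε) :
    (q - p) * ((φ p + φ q) / 2 - ε * (q - p) / 2) ≤ ∫ x in p..q, φ x := by
  have hε0 : 0 ≤ ε :=
    (abs_nonneg _).trans (hε p (left_mem_Icc.2 hpq.le) p (left_mem_Icc.2 hpq.le))
  have key : ∀ x ∈ Icc p q, φ p + φ q - ε * (q - p) ≤ φ x + φ (p + q - x) := by
    intro x hx
    rcases hx.1.eq_or_lt with rfl | hpx
    · have : φ p + φ (p + q - p) = φ p + φ q := by congr 2; ring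
      nlinarith [mul_nonneg hε0 (sub_nonneg.2 hpq.le)]
    have hy : p + q - x < q := by linarith
    obtain ⟨c, hcm, hc1⟩ := exists_hasDerivAt_eq_slope φ φ' hpx
      (hc.mono (Icc_subset_Icc le_rfl hx.2)) (fun y hy => hd y ⟨hy.1, hy.2.trans_le hx.2⟩)
    obtain ⟨d, hdm, hd1⟩ := exists_hasDerivAt_eq_slope φ φ' hy
      (hc.mono (Icc_subset_Icc (by linarith [hx.2]) le_rfl))
      (fun y hy => hd y ⟨by linarith [hy.1, hx.2], hy.2⟩)
    rw [eq_div_iff (by linarith)] at hc1 hd1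
    have h := hε c ⟨hcm.1.le, hcm.2.le.trans hx.2⟩ d ⟨by linarith [hdm.1, hx.2], hdm.2.le⟩
    have h' := (abs_le.1 h).1
    have e : q - (p + q - x) = x - p := by ring
    rw [e] at hd1
    nlinarith [mul_le_mul_of_nonneg_right h' (sub_nonneg.2 hpx.le),
      mul_le_mul_of_nonneg_left hx.2 hε0]
  have hi : IntervalIntegrable φ volume p q := by
    apply ContinuousOn.intervalIntegrable
    rwa [uIcc_of_le hpq.le]
  have hc' : ContinuousOn (fun x => φ (p + q - x)) (Icc p q) :=
    hc.comp (by fun_prop) (fun x hx => ⟨by linarith [hx.2], by linarith [hx.1]⟩)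
  have hi' : IntervalIntegrable (fun x => φ (p + q - x)) volume p q := by
    apply ContinuousOn.intervalIntegrable
    rwa [uIcc_of_le hpq.le]
  have h2 := intervalIntegral.integral_mono_on hpq.le
    (intervalIntegrable_const (c := φ p + φ q - ε * (q - p)) (μ := volume)) (hi.add hi') key
  have h3 : ∫ x in p..q, φ (p + q - x) = ∫ x in p..q, φ x := by
    rw [intervalIntegral.integral_comp_sub_left]
    congr 1 <;> ring
  rw [intervalIntegral.integral_add hi hi', h3, intervalIntegral.integral_const, smul_eq_mul] at h2
  linarith

/-- The derivative of the profile on `(-1, 1)`. -/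
noncomputable def bumpDeriv (μ x : ℝ) : ℝ := -(2 * x) * μ * (1 - x ^ 2) ^ (μ - 1)

lemma bump_hasDerivAt (μ : ℝ) {x : ℝ} (hx : x ^ 2 < 1) :
    HasDerivAt (bump μ) (bumpDeriv μ x) x := by
  have h1 : HasDerivAt (fun y : ℝ => 1 - y ^ 2) (-(2 * x)) x := by
    simpa using (hasDerivAt_pow 2 x).const_sub 1
  have h2 := h1.rpow_const (p := μ) (Or.inl (by linarith))
  refine h2.congr_of_eventuallyEq ?_
  have : ∀ᶠ y in 𝓝 x, y ^ 2 < 1 :=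
    (continuous_pow 2).continuousAt.eventually (gt_mem_nhds hx)
  filter_upwards [this] with y hy
  rw [bump, max_eq_left (by linarith)]

lemma bumpDeriv_continuousOn (μ : ℝ) {b : ℝ} (hb : b < 1) :
    ContinuousOn (bumpDeriv μ) (Icc 0 b) := by
  unfold bumpDeriv
  refine ContinuousOn.mul (by fun_prop) (ContinuousOn.rpow_const (by fun_prop) fun x hx => Or.inl ?_)
  nlinarith [hx.1, hx.2]

/-- `liminf_{A → ∞} f_μ(A) ≥ 1/2`. The trapezoidal rule is applied only on the lattice cells inside
`[0, bA]` with `b < 1`, because `bumpDeriv` may blow up at `1`; the remaining cells contribute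
nonnegatively. -/
lemma fMu_ge_half {μ : ℝ} (hμ : 0 < μ) {η : ℝ} (hη : 0 < η) :
    ∃ M : ℝ, ∀ A, M ≤ A → 1 / 2 - η ≤ fMu μ A := by
  obtain ⟨a, ha0, ha1, ha⟩ : ∃ a : ℝ, 0 < a ∧ a < 1 ∧ bump μ a ≤ η := by
    have h : ∀ᶠ x in 𝓝[<] (1 : ℝ), bump μ x < η := by
      refine ((bump_continuous hμ).continuousAt.eventually (gt_mem_nhds ?_)).filter_mono
        nhdsWithin_le_nhds
      rwa [bump_eq_zero hμ le_rfl]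
    have h2 : ∀ᶠ x in 𝓝[<] (1 : ℝ), 0 < x :=
      (lt_mem_nhds one_pos).filter_mono nhdsWithin_le_nhds
    obtain ⟨x, ⟨hx1, hx2⟩, hx3⟩ := ((h.and h2).and self_mem_nhdsWithin).exists
    exact ⟨x, hx2, hx3, hx1.le⟩
  set b := (1 + a) / 2 with hbdef
  have hb : b < 1 := by linarith
  have hb0 : 0 < b := by linarith
  have huc := isCompact_Icc.uniformContinuousOn_of_continuous (bumpDeriv_continuousOn μ hb)
  obtain ⟨δ, hδ, hosc⟩ := Metric.uniformContinuousOn_iff_le.1 huc η hη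
  refine ⟨max 1 (max (2 / (1 - a)) (1 / δ)), fun A hA => ?_⟩
  have hA1 : 1 ≤ A := (le_max_left _ _).trans hA
  have hA2 : 2 / (1 - a) ≤ A := (le_max_left _ _).trans ((le_max_right _ _).trans hA)
  have hA3 : 1 / δ ≤ A := (le_max_right _ _).trans ((le_max_right _ _).trans hA)
  have hA0 : 0 < A := by linarith
  rw [div_le_iff₀ (by linarith)] at hA2
  rw [div_le_iff₀ hδ] at hA3
  set n := ⌈a * A⌉₊ with hn
  have hn1 : a * A ≤ n := Nat.le_ceil _
  have hn2 : (n : ℝ) ≤ b * A := by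
    have := Nat.ceil_lt_add_one (mul_nonneg ha0.le hA0.le)
    rw [hbdef]
    nlinarith
  have hnN : n ≤ ⌈A⌉₊ := Nat.ceil_le_ceil (by nlinarith)
  rw [fMu_eq_sum hμ hA0 (Nat.le_ceil A)]
  refine le_trans ?_ (Finset.sum_le_sum_of_subset_of_nonneg (Finset.range_subset_range.2 hnN)
    (fun k _ _ => block_nonneg hμ hA0 k))
  have hblock : ∀ k ∈ Finset.range n,
      (bump μ ((k : ℝ) / A) - bump μ (((k + 1 : ℕ) : ℝ) / A)) / 2 - η / (2 * A) ≤
      (∫ x in (k : ℝ)..((k + 1 : ℕ) : ℝ), bump μ (x / A)) - bump μ (((k : ℝ) + 1) / A) := by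
    intro k hk
    have hk' : ((k + 1 : ℕ) : ℝ) ≤ n := by exact_mod_cast Finset.mem_range.1 hk
    have hkb : ((k + 1 : ℕ) : ℝ) / A ≤ b := by
      rw [div_le_iff₀ hA0]
      linarith
    have hlt : (k : ℝ) / A < ((k + 1 : ℕ) : ℝ) / A := by
      gcongr
      linarith
    have hk0 : 0 ≤ (k : ℝ) / A := by positivity
    have hw : ((k + 1 : ℕ) : ℝ) / A - (k : ℝ) / A = 1 / A := by
      push_cast
      ring
    have hsub : Icc ((k : ℝ) / A) (((k + 1 : ℕ) : ℝ) / A) ⊆ Icc 0 b := Icc_subset_Icc hk0 hkb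
    have := trapezoid_le_integral (φ := bump μ) (φ' := bumpDeriv μ) (ε := η) hlt
      (bump_continuous hμ).continuousOn
      (fun x hx => bump_hasDerivAt μ (by
        have := hsub ⟨hx.1.le, hx.2.le⟩
        nlinarith [this.1, this.2]))
      (fun x hx y hy => by
        rw [← Real.dist_eq]
        refine hosc x (hsub hx) y (hsub hy) ?_
        rw [Real.dist_eq, abs_le]
        have : 1 / A ≤ δ := by
          rw [div_le_iff₀ hA0]
          linarith
        constructor <;> linarith [hx.1, hx.2, hy.1, hy.2])
    rw [intervalIntegral.integral_comp_div _ hA0.ne', smul_eq_mul]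
    rw [hw] at this
    have h3 := mul_le_mul_of_nonneg_left this hA0.le
    have e : A * (1 / A * ((bump μ ((k : ℝ) / A) + bump μ (((k + 1 : ℕ) : ℝ) / A)) / 2
        - η * (1 / A) / 2)) = (bump μ ((k : ℝ) / A) + bump μ (((k + 1 : ℕ) : ℝ) / A)) / 2
        - η / (2 * A) := by
      field_simp
    rw [e] at h3
    have e2 : ((k : ℝ) + 1) = ((k + 1 : ℕ) : ℝ) := by push_cast; ring
    rw [e2]
    linarith
  refine le_trans ?_ (Finset.sum_le_sum hblock)
  rw [Finset.sum_sub_distrib, ← Finset.sum_div,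
    Finset.sum_range_sub' (fun k : ℕ => bump μ ((k : ℝ) / A))]
  simp only [Nat.cast_zero, zero_div, bump_zero, Finset.sum_const, Finset.card_range, nsmul_eq_mul]
  have h1 : bump μ ((n : ℝ) / A) ≤ η :=
    (bump_anti hμ ha0.le (by rwa [le_div_iff₀ hA0])).trans ha
  have h2 : (n : ℝ) * (η / (2 * A)) ≤ η / 2 := by
    rw [mul_div_assoc', div_le_div_iff₀ (by positivity) two_pos]
    nlinarith [mul_le_mul_of_nonneg_right (hn2.trans (by nlinarith : b * A ≤ A)) hη.le]
  linarith

/-! ### Laplace transforms and theta inversion -/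

lemma laplace_rpow {s z : ℝ} (hs : 0 < s) (hz : 0 < z) :
    Integrable (fun t : ℝ => (max t 0) ^ s * Real.exp (-(z * t))) ∧
      ∫ t : ℝ, (max t 0) ^ s * Real.exp (-(z * t)) = (1 / z) ^ (s + 1) * Real.Gamma (s + 1) := by
  have hsupp : ∀ t ∉ Ioi (0 : ℝ), (max t 0) ^ s * Real.exp (-(z * t)) = 0 := fun t ht => by
    rw [max_eq_right (not_lt.1 ht), Real.zero_rpow hs.ne', zero_mul]
  have hcongr : EqOn (fun t : ℝ => (max t 0) ^ s * Real.exp (-(z * t)))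
      (fun t => t ^ (s + 1 - 1) * Real.exp (-(z * t))) (Ioi 0) := fun t ht => by
    simp only [add_sub_cancel_right, max_eq_left (mem_Ioi.1 ht).le]
  constructor
  · rw [← integrableOn_iff_integrable_of_support_subset (s := Ioi 0)
      (Function.support_subset_iff'.2 hsupp), integrableOn_congr_fun hcongr measurableSet_Ioi]
    have := integrableOn_rpow_mul_exp_neg_mul_rpow (p := 1) (s := s) (b := z) (by linarith)
      one_pos hz
    simpa using this
  · rw [← setIntegral_eq_integral_of_forall_compl_eq_zero hsupp,
      setIntegral_congr_fun measurableSet_Ioi hcongr]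
    exact Real.integral_rpow_mul_exp_neg_mul_Ioi (by linarith) hz

lemma laplace_shift {s z : ℝ} (hs : 0 < s) (hz : 0 < z) (c : ℝ) :
    Integrable (fun t : ℝ => (max (t - c) 0) ^ s * Real.exp (-(z * t))) ∧
      ∫ t : ℝ, (max (t - c) 0) ^ s * Real.exp (-(z * t)) =
        Real.exp (-(z * c)) * ((1 / z) ^ (s + 1) * Real.Gamma (s + 1)) := by
  have e : (fun t : ℝ => (max (t - c) 0) ^ s * Real.exp (-(z * t))) = fun t =>
      Real.exp (-(z * c)) * ((max (t - c) 0) ^ s * Real.exp (-(z * (t - c)))) := by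
    ext t
    rw [mul_left_comm, ← Real.exp_add]
    congr 2
    ring
  obtain ⟨h1, h2⟩ := laplace_rpow hs hz
  rw [e]
  refine ⟨(h1.comp_sub_right c).const_mul _, ?_⟩
  rw [integral_const_mul,
    integral_sub_right_eq_self (fun t => (max t 0) ^ s * Real.exp (-(z * t))) c, h2]

/-- The one-sided theta sum `∑_{k ≥ 1} e^{-x k²}`. -/
noncomputable def theta (x : ℝ) : ℝ := ∑' k : ℕ, Real.exp (-(x * ((k : ℝ) + 1) ^ 2))

lemma theta_term_le {x : ℝ} (hx : 0 < x) (k : ℕ) :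
    Real.exp (-(x * ((k : ℝ) + 1) ^ 2)) ≤ Real.exp (-x) * Real.exp (-x) ^ k := by
  rw [← Real.exp_nat_mul, ← Real.exp_add, Real.exp_le_exp]
  have hk : (0 : ℝ) ≤ k := Nat.cast_nonneg k
  nlinarith [mul_nonneg hx.le hk, mul_nonneg hx.le (mul_nonneg hk hk)]

lemma theta_summable {x : ℝ} (hx : 0 < x) :
    Summable fun k : ℕ => Real.exp (-(x * ((k : ℝ) + 1) ^ 2)) :=
  Summable.of_nonneg_of_le (fun _ => (Real.exp_pos _).le) (theta_term_le hx)
    ((summable_geometric_of_lt_one (Real.exp_pos _).le (by simpa using hx)).mul_left _)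

lemma theta_nonneg (x : ℝ) : 0 ≤ theta x := tsum_nonneg fun _ => (Real.exp_pos _).le

lemma theta_le {x : ℝ} (hx : 1 ≤ x) : theta x ≤ 2 * Real.exp (-x) := by
  have hx0 : 0 < x := by linarith
  have h1 : Real.exp (-x) < 1 := by simpa using hx0
  have h2 : Real.exp (-x) ≤ 1 / 2 := by
    rw [Real.exp_neg, one_div]
    exact inv_anti₀ two_pos (by linarith [Real.add_one_le_exp x])
  have := (theta_summable hx0).tsum_le_tsum (theta_term_le hx0)
    ((summable_geometric_of_lt_one (Real.exp_pos _).le h1).mul_left _)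
  rw [tsum_mul_left, tsum_geometric_of_lt_one (Real.exp_pos _).le h1] at this
  refine this.trans ?_
  rw [mul_comm]
  refine mul_le_mul_of_nonneg_right ?_ (Real.exp_pos _).le
  exact inv_le_of_inv_le₀ two_pos (by linarith)

lemma tsum_int_eq_theta {x : ℝ} (hx : 0 < x) :
    ∑' n : ℤ, Real.exp (-(x * (n : ℝ) ^ 2)) = 1 + 2 * theta x := by
  have hs := theta_summable hx
  have hs0 : Summable fun k : ℕ => Real.exp (-(x * (((k : ℕ) : ℤ) : ℝ) ^ 2)) := by
    rw [← summable_nat_add_iff 1]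
    simpa using hs
  have hs1 : Summable fun k : ℕ => Real.exp (-(x * ((-((k : ℤ) + 1) : ℤ) : ℝ) ^ 2)) := by
    refine hs.congr fun k => ?_
    congr 2
    push_cast
    ring
  rw [tsum_of_nat_of_neg_add_one (f := fun n : ℤ => Real.exp (-(x * (n : ℝ) ^ 2))) hs0 hs1,
    hs0.tsum_eq_zero_add]
  have e : ∑' k : ℕ, Real.exp (-(x * ((-((k : ℤ) + 1) : ℤ) : ℝ) ^ 2)) = theta x := by
    unfold theta
    congr 1
    ext k
    congr 2
    push_cast
    ring
  rw [e]
  have e2 : ∑' k : ℕ, Real.exp (-(x * (((k + 1 : ℕ) : ℤ) : ℝ) ^ 2)) = theta x := by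
    simp [theta]
  rw [e2]
  simp
  ring

/-- Jacobi's theta inversion. -/
lemma theta_inversion {z : ℝ} (hz : 0 < z) :
    1 / 2 + theta z = √(Real.pi / z) * (1 / 2 + theta (Real.pi ^ 2 / z)) := by
  have hp := Real.pi_pos
  have h := Real.tsum_exp_neg_mul_int_sq (a := z / Real.pi) (by positivity)
  have e1 : ∀ n : ℤ, -Real.pi * (z / Real.pi) * (n : ℝ) ^ 2 = -(z * (n : ℝ) ^ 2) := fun n => by
    field_simp
  have e2 : ∀ n : ℤ, -Real.pi / (z / Real.pi) * (n : ℝ) ^ 2 =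
      -(Real.pi ^ 2 / z * (n : ℝ) ^ 2) := fun n => by
    field_simp
  simp only [e1, e2] at h
  rw [tsum_int_eq_theta hz, tsum_int_eq_theta (by positivity), ← Real.sqrt_eq_rpow, one_div,
    ← Real.sqrt_inv, inv_div] at h
  linarith

lemma laplace_rieszSum {μ z : ℝ} (hμ : 0 < μ) (hz : 0 < z) :
    Integrable (fun t : ℝ => rieszSum μ t * Real.exp (-(z * t))) ∧
      ∫ t : ℝ, rieszSum μ t * Real.exp (-(z * t)) =
        theta z * ((1 / z) ^ (μ + 1) * Real.Gamma (μ + 1)) := by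
  constructor
  -- Positivity of `f_μ` dominates `rieszSum μ t` by a multiple of `t ^ (μ + 1 / 2)`.
  · have hb := ((laplace_rpow (s := μ + 1 / 2) (by linarith) hz).1).const_mul
      (eulerBeta (1 + μ) (1 / 2) / 2)
    refine hb.mono' ?_ (ae_of_all _ fun t => ?_)
    · exact ((rieszSum_continuous hμ).mul (by fun_prop)).aestronglyMeasurable
    rw [Real.norm_of_nonneg (mul_nonneg (rieszSum_nonneg μ t) (Real.exp_pos _).le), ← mul_assoc]
    refine mul_le_mul_of_nonneg_right ?_ (Real.exp_pos _).le
    rcases le_or_gt t 0 with ht | ht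
    · have h0 : t ≤ ((0 : ℕ) : ℝ) := by simpa using ht
      rw [rieszSum_eq_sum hμ h0, max_eq_right ht, Real.zero_rpow (by linarith)]
      simp
    · have h := fMu_pos hμ (Real.sqrt_pos.2 ht)
      rw [fMu_eq_rieszSum μ (Real.sqrt_pos.2 ht), Real.sq_sqrt ht.le, sub_pos,
        div_lt_iff₀ (by positivity)] at h
      rw [max_eq_left ht.le, Real.rpow_add ht, ← Real.sqrt_eq_rpow]
      linarith
  · have hF := fun k : ℕ => laplace_shift hμ hz (((k : ℝ) + 1) ^ 2)
    have h := integral_tsum_of_summable_integral_norm (fun k => (hF k).1) (by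
      have : ∀ k : ℕ, ∫ t : ℝ, ‖(max (t - ((k : ℝ) + 1) ^ 2) 0) ^ μ * Real.exp (-(z * t))‖ =
          Real.exp (-(z * ((k : ℝ) + 1) ^ 2)) * ((1 / z) ^ (μ + 1) * Real.Gamma (μ + 1)) := by
        intro k
        rw [← (hF k).2]
        congr 1
        ext t
        exact Real.norm_of_nonneg (mul_nonneg (Real.rpow_nonneg (le_max_right _ _) _)
          (Real.exp_pos _).le)
      simp only [this]
      exact (theta_summable hz).mul_right _)
    simp only [fun k => (hF k).2, tsum_mul_right] at h
    exact h.symm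

/-! ### A value below one half -/

/-- The un-normalised defect: for `t = A² > 0` it equals `A^{2μ} (f_μ(A) - 1/2)`, and it
vanishes for `t ≤ 0`. -/
noncomputable def defect (μ t : ℝ) : ℝ :=
  eulerBeta (1 + μ) (1 / 2) / 2 * (max t 0) ^ (μ + 1 / 2) - (max t 0) ^ μ / 2 - rieszSum μ t

lemma defect_continuous {μ : ℝ} (hμ : 0 < μ) : Continuous (defect μ) := by
  unfold defect
  refine Continuous.sub (Continuous.sub (continuous_const.mul ?_) (Continuous.div_const ?_ _))
    (rieszSum_continuous hμ)
  · exact Continuous.rpow_const (by fun_prop) (fun x => Or.inr (by linarith))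
  · exact Continuous.rpow_const (by fun_prop) (fun x => Or.inr hμ.le)

/-- The Laplace transform of the defect is, by theta inversion, negative and exponentially small
as `z → 0`. -/
lemma laplace_defect {μ z : ℝ} (hμ : 0 < μ) (hz : 0 < z) :
    Integrable (fun t : ℝ => defect μ t * Real.exp (-(z * t))) ∧
      ∫ t : ℝ, defect μ t * Real.exp (-(z * t)) =
        -((1 / z) ^ (μ + 1) * Real.Gamma (μ + 1) * √(Real.pi / z) * theta (Real.pi ^ 2 / z)) := by
  obtain ⟨i1, e1⟩ := laplace_rpow (s := μ + 1 / 2) (by linarith) hz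
  obtain ⟨i2, e2⟩ := laplace_rpow hμ hz
  obtain ⟨i3, e3⟩ := laplace_rieszSum hμ hz
  have i1' := i1.const_mul (eulerBeta (1 + μ) (1 / 2) / 2)
  have i2' := i2.const_mul (1 / 2)
  have e : (fun t : ℝ => defect μ t * Real.exp (-(z * t))) = fun t =>
      eulerBeta (1 + μ) (1 / 2) / 2 * ((max t 0) ^ (μ + 1 / 2) * Real.exp (-(z * t))) -
        1 / 2 * ((max t 0) ^ μ * Real.exp (-(z * t))) - rieszSum μ t * Real.exp (-(z * t)) := by
    ext t
    unfold defect
    ring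
  rw [e]
  refine ⟨(i1'.sub i2').sub i3, ?_⟩
  have hs := integral_sub (i1'.sub i2') i3
  simp only [Pi.sub_apply] at hs
  rw [hs, integral_sub i1' i2', integral_const_mul, integral_const_mul, e1, e2, e3]
  have hB : eulerBeta (1 + μ) (1 / 2) * Real.Gamma (μ + 1 / 2 + 1) =
      Real.Gamma (μ + 1) * √Real.pi := by
    have : Real.Gamma (1 + μ + 1 / 2) ≠ 0 := (Real.Gamma_pos_of_pos (by linarith)).ne'
    rw [eulerBeta, show μ + 1 / 2 + 1 = 1 + μ + 1 / 2 by ring, div_mul_cancel₀ _ this,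
      Real.Gamma_one_half_eq, add_comm]
  have hz' : (0 : ℝ) < 1 / z := by positivity
  have hpow : (1 / z) ^ (μ + 1 / 2 + 1) = (1 / z) ^ (μ + 1) * √(1 / z) := by
    rw [show μ + 1 / 2 + 1 = (μ + 1) + 1 / 2 by ring, Real.rpow_add hz', Real.sqrt_eq_rpow]
  have hsq : √(Real.pi / z) = √Real.pi * √(1 / z) := by
    rw [← Real.sqrt_mul Real.pi_pos.le, mul_one_div]
  have ht := theta_inversion hz
  rw [hpow]
  have : eulerBeta (1 + μ) (1 / 2) / 2 * ((1 / z) ^ (μ + 1) * √(1 / z) *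
      Real.Gamma (μ + 1 / 2 + 1)) =
      (1 / z) ^ (μ + 1) * Real.Gamma (μ + 1) * √(Real.pi / z) / 2 := by
    rw [hsq]
    linear_combination ((1 / z) ^ (μ + 1) * √(1 / z) / 2) * hB
  rw [this]
  linear_combination -((1 / z) ^ (μ + 1) * Real.Gamma (μ + 1)) * ht

lemma defect_of_nonpos {μ t : ℝ} (hμ : 0 < μ) (ht : t ≤ 0) : defect μ t = 0 := by
  have h0 : t ≤ ((0 : ℕ) : ℝ) := by simpa using ht
  rw [defect, rieszSum_eq_sum hμ h0, max_eq_right ht, Real.zero_rpow (by linarith),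
    Real.zero_rpow hμ.ne']
  simp

lemma defect_of_le_one {μ t : ℝ} (hμ : 0 < μ) (ht : 0 < t) (ht1 : t ≤ 1) :
    defect μ t = t ^ μ / 2 * (eulerBeta (1 + μ) (1 / 2) * √t - 1) := by
  have h0 : t ≤ ((1 : ℕ) : ℝ) := by simpa using ht1
  rw [defect, rieszSum_eq_sum hμ h0, max_eq_left ht.le, Real.rpow_add ht, ← Real.sqrt_eq_rpow]
  have : max (t - 1) 0 = 0 := max_eq_right (by linarith)
  simp [this, Real.zero_rpow hμ.ne']
  ring

lemma defect_eq_fMu {μ t : ℝ} (ht : 0 < t) :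
    defect μ t = t ^ μ * (fMu μ √t - 1 / 2) := by
  rw [fMu_eq_rieszSum μ (Real.sqrt_pos.2 ht), Real.sq_sqrt ht.le, defect, max_eq_left ht.le,
    Real.rpow_add ht, ← Real.sqrt_eq_rpow]
  have : t ^ μ ≠ 0 := by positivity
  field_simp
  ring

/-- If `f_μ` were at least `1/2` on `[1, ∞)`, the defect would change sign exactly once, at
`t₀ = 1/B²`, from negative to positive. Then `(e - e²) * defect ≥ 0` for `e = exp (z (t₀ - t))`,
and its integral is at least of order `z`, whereas by `laplace_defect` it is exponentially small
as `z → 0`. -/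
lemma exists_fMu_lt_half {μ : ℝ} (hμ : 0 < μ) : ∃ A, 1 ≤ A ∧ fMu μ A < 1 / 2 := by
  by_contra! hcon
  set B := eulerBeta (1 + μ) (1 / 2) with hB
  have hB1 : 1 ≤ B := by
    have h := hcon 1 le_rfl
    rw [fMu_eq_tsum, tsum_bump_eq_sum hμ one_pos (N := 1) (by simp)] at h
    simp only [Finset.range_one, Finset.sum_singleton, Nat.cast_zero, zero_add, div_one,
      bump_eq_zero hμ le_rfl] at h
    linarith
  have hB0 : 0 < B := by linarith
  set t₀ := 1 / B ^ 2 with ht₀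
  have ht₀0 : 0 < t₀ := by positivity
  have ht₀1 : t₀ ≤ 1 := by
    rw [ht₀, div_le_one (by positivity)]
    nlinarith
  have hs₀ : B * √t₀ = 1 := by
    rw [ht₀, Real.sqrt_div zero_le_one, Real.sqrt_sq hB0.le, Real.sqrt_one]
    field_simp
  have hneg : ∀ t, 0 < t → t < t₀ → defect μ t < 0 := fun t h0 h1 => by
    rw [defect_of_le_one hμ h0 (h1.le.trans ht₀1)]
    have : B * √t < B * √t₀ := mul_lt_mul_of_pos_left (Real.sqrt_lt_sqrt h0.le h1) hB0
    exact mul_neg_of_pos_of_neg (by positivity) (by linarith)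
  have hpos : ∀ t, t₀ ≤ t → 0 ≤ defect μ t := fun t h1 => by
    have h0 : 0 < t := ht₀0.trans_le h1
    rcases le_or_gt t 1 with h | h
    · rw [defect_of_le_one hμ h0 h]
      have : B * √t₀ ≤ B * √t := mul_le_mul_of_nonneg_left (Real.sqrt_le_sqrt h1) hB0.le
      exact mul_nonneg (by positivity) (by linarith)
    · rw [defect_eq_fMu h0]
      exact mul_nonneg (by positivity) (sub_nonneg.2 (hcon _ (Real.one_le_sqrt.2 h.le)))
  set c := ∫ t in (0 : ℝ)..t₀, (t₀ - t) * -defect μ t with hc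
  have hccont : Continuous fun t => (t₀ - t) * -defect μ t :=
    (by fun_prop : Continuous fun t : ℝ => t₀ - t).mul (defect_continuous hμ).neg
  have hc0 : 0 < c := by
    refine intervalIntegral.intervalIntegral_pos_of_pos_on (hccont.intervalIntegrable _ _)
      (fun t ht => ?_) ht₀0
    exact mul_pos (by linarith [ht.2]) (by linarith [hneg t ht.1 ht.2])
  -- The difference of the weighted transforms at `z` and `2z`; the one at `z` is nonpositive and
  -- is dropped.
  have main : ∀ z : ℝ, 0 < z → z * c ≤ -(Real.exp (2 * z * t₀) *
      ∫ t : ℝ, defect μ t * Real.exp (-(2 * z * t))) := by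
    intro z hz
    obtain ⟨i1, e1⟩ := laplace_defect hμ hz
    obtain ⟨i2, e2⟩ := laplace_defect hμ (by positivity : 0 < 2 * z)
    set D : ℝ → ℝ := fun t => Real.exp (z * t₀) * (defect μ t * Real.exp (-(z * t))) -
      Real.exp (2 * z * t₀) * (defect μ t * Real.exp (-(2 * z * t))) with hD
    have hDe : ∀ t, D t = defect μ t *
        (Real.exp (z * (t₀ - t)) - Real.exp (z * (t₀ - t)) ^ 2) := fun t => by
      have a1 : Real.exp (z * (t₀ - t)) = Real.exp (z * t₀) * Real.exp (-(z * t)) := by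
        rw [← Real.exp_add]
        congr 1
        ring
      have a2 : Real.exp (z * (t₀ - t)) ^ 2 =
          Real.exp (2 * z * t₀) * Real.exp (-(2 * z * t)) := by
        rw [← Real.exp_nat_mul, ← Real.exp_add]
        congr 1
        push_cast
        ring
      rw [a2, a1, hD]
      ring
    have hDi : Integrable D := (i1.const_mul _).sub (i2.const_mul _)
    have hlow : ∀ t, 0 < t → t < t₀ → z * ((t₀ - t) * -defect μ t) ≤ D t := fun t h0 h1 => by
      rw [hDe]
      have hn := hneg t h0 h1
      have hu : 0 < z * (t₀ - t) := mul_pos hz (by linarith)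
      have he := Real.add_one_le_exp (z * (t₀ - t))
      have : z * (t₀ - t) ≤ Real.exp (z * (t₀ - t)) ^ 2 - Real.exp (z * (t₀ - t)) := by
        nlinarith
      nlinarith
    have hD0 : ∀ t, 0 ≤ D t := fun t => by
      rcases le_or_gt t 0 with h | h
      · rw [hDe, defect_of_nonpos hμ h, zero_mul]
      rcases lt_or_ge t t₀ with h1 | h1
      · refine le_trans ?_ (hlow t h h1)
        exact mul_nonneg hz.le (mul_nonneg (by linarith) (by linarith [hneg t h h1]))
      · rw [hDe]
        have : Real.exp (z * (t₀ - t)) ≤ 1 :=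
          Real.exp_le_one_iff.2 (mul_nonpos_of_nonneg_of_nonpos hz.le (by linarith))
        exact mul_nonneg (hpos t h1) (by nlinarith [Real.exp_pos (z * (t₀ - t))])
    have hI : z * c ≤ ∫ t, D t := by
      rw [hc, ← intervalIntegral.integral_const_mul]
      refine le_trans ?_ (setIntegral_le_integral (s := Ioc 0 t₀) hDi (ae_of_all _ hD0))
      rw [← intervalIntegral.integral_of_le ht₀0.le]
      refine intervalIntegral.integral_mono_on_of_le_Ioo ht₀0.le
        ((hccont.const_mul z).intervalIntegrable _ _) (hDi.intervalIntegrable)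
        (fun t ht => hlow t ht.1 ht.2)
    rw [hD, integral_sub (i1.const_mul _) (i2.const_mul _), integral_const_mul,
      integral_const_mul, e1] at hI
    have hG : 0 < Real.Gamma (μ + 1) := Real.Gamma_pos_of_pos (by linarith)
    have : 0 ≤ Real.exp (z * t₀) * ((1 / z) ^ (μ + 1) * Real.Gamma (μ + 1) * √(Real.pi / z) *
        theta (Real.pi ^ 2 / z)) := by
      have := theta_nonneg (Real.pi ^ 2 / z)
      positivity
    linarith
  have hG : 0 < Real.Gamma (μ + 1) := Real.Gamma_pos_of_pos (by linarith)
  set K := 4 * Real.exp t₀ * Real.Gamma (μ + 1) * √Real.pi with hK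
  -- Here `2z = 1/w`, so `z → 0` becomes `w → ∞`.
  have hfin : ∀ w : ℝ, 1 ≤ w → c ≤ K * (w ^ (μ + 5 / 2) * Real.exp (-Real.pi ^ 2 * w)) := by
    intro w hw
    have hw0 : 0 < w := by linarith
    have h := main (1 / (2 * w)) (by positivity)
    have ez : 2 * (1 / (2 * w)) = 1 / w := by field_simp
    rw [ez, (laplace_defect hμ (by positivity : 0 < 1 / w)).2, one_div_one_div, div_div_eq_mul_div,
      div_div_eq_mul_div, div_one, div_one, mul_neg, neg_neg, one_div_mul_eq_div, div_le_iff₀ (by positivity)] at h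
    have h1 : Real.exp (1 / w * t₀) ≤ Real.exp t₀ := by
      rw [Real.exp_le_exp, one_div_mul_eq_div]
      exact div_le_self ht₀0.le hw
    have h2 : theta (Real.pi ^ 2 * w) ≤ 2 * Real.exp (-(Real.pi ^ 2 * w)) :=
      theta_le (by nlinarith [Real.pi_gt_three])
    have h3 : w ^ (μ + 5 / 2) = w ^ (μ + 1) * √w * w := by
      rw [show μ + 5 / 2 = (μ + 1) + 1 / 2 + 1 by ring, Real.rpow_add hw0, Real.rpow_add hw0,
        Real.rpow_one, Real.sqrt_eq_rpow]
    refine h.trans ?_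
    rw [Real.sqrt_mul Real.pi_pos.le, h3, neg_mul, hK]
    have h4 := theta_nonneg (Real.pi ^ 2 * w)
    calc _ ≤ Real.exp t₀ * (w ^ (μ + 1) * Real.Gamma (μ + 1) * (√Real.pi * √w) *
          (2 * Real.exp (-(Real.pi ^ 2 * w)))) * (2 * w) := by gcongr
      _ = _ := by ring
  have hlim : Tendsto (fun w : ℝ => K * (w ^ (μ + 5 / 2) * Real.exp (-Real.pi ^ 2 * w))) atTop
      (𝓝 0) := by
    have := (tendsto_rpow_mul_exp_neg_mul_atTop_nhds_zero (μ + 5 / 2) (Real.pi ^ 2)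
      (by positivity)).const_mul K
    simpa using this
  have := ge_of_tendsto hlim ((eventually_ge_atTop 1).mono hfin)
  linarith

end EpsMu

/-- For every `μ > 0` there is `ε_μ > 0`, attained as the minimum of `f_μ` over
`[1,∞)` at some `A* ≥ 1`, such that for all `A ≥ 1` one has
`∑_{k=1}^∞ (1 - k²/A²)₊^μ ≤ (A/2)·B(1+μ,1/2) − ε_μ`. -/
theorem exists_epsilonMu (μ : ℝ) (hμ : 0 < μ) :
    ∃ ε : ℝ, 0 < ε ∧
      (∃ Astar : ℝ, 1 ≤ Astar ∧ fMu μ Astar = ε ∧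
        IsMinOn (fMu μ) (Set.Ici (1 : ℝ)) Astar) ∧
      ∀ A : ℝ, 1 ≤ A →
        (∑' k : ℕ, (max (1 - ((k : ℝ) + 1) ^ 2 / A ^ 2) 0) ^ μ) ≤
          (A / 2) * eulerBeta (1 + μ) (1 / 2) - ε := by
  obtain ⟨A₁, hA₁, hlt⟩ := EpsMu.exists_fMu_lt_half hμ
  obtain ⟨M, hM⟩ := EpsMu.fMu_ge_half hμ (η := 1 / 2 - fMu μ A₁) (by linarith)
  obtain ⟨A₀, hA₀, hmin⟩ : ∃ x ∈ Set.Ici (1 : ℝ), IsMinOn (fMu μ) (Set.Ici 1) x := by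
    refine (EpsMu.fMu_continuousOn hμ).exists_isMinOn' isClosed_Ici hA₁ ?_
    rw [cocompact_eq_atBot_atTop, Filter.eventually_inf_principal, Filter.eventually_sup]
    constructor
    · filter_upwards [Filter.eventually_lt_atBot 1] with x hx hx1
      exact absurd hx (not_lt.2 hx1)
    · filter_upwards [Filter.eventually_ge_atTop M] with x hx _
      linarith [hM x hx]
  have hA₀' : (1 : ℝ) ≤ A₀ := hA₀
  refine ⟨fMu μ A₀, EpsMu.fMu_pos hμ (by linarith), ⟨A₀, hA₀', rfl, hmin⟩, fun A hA => ?_⟩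
  have h : fMu μ A₀ ≤ fMu μ A := hmin hA
  have e : fMu μ A = (A / 2) * eulerBeta (1 + μ) (1 / 2) -
      ∑' k : ℕ, (max (1 - ((k : ℝ) + 1) ^ 2 / A ^ 2) 0) ^ μ := rfl
  linarith
end

section
/- For every real μ > 0, the quantity ε_μ := inf_{A ≥ 1} f_μ(A) satisfies 2·ε_μ ≤ min{1, B(1+μ, 1/2)}. -/
open MeasureTheory in
/-- The substitution `y = x²` in Euler's integral for `B(1/2, 1+μ)`. -/
lemma eulerBeta_eq_integral (μ : ℝ) (hμ : 0 < μ) :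
    eulerBeta (1 + μ) (1 / 2) = 2 * ∫ x in (0 : ℝ)..1, (1 - x ^ 2) ^ μ := by
  have h1 : eulerBeta (1 + μ) (1 / 2) = ProbabilityTheory.beta (1 / 2) (1 + μ) := by
    unfold eulerBeta ProbabilityTheory.beta
    rw [add_comm (1 / 2 : ℝ), mul_comm (Real.Gamma (1 / 2))]
  have h2 : Complex.betaIntegral ((1 / 2 : ℝ) : ℂ) ((1 + μ : ℝ) : ℂ) =
      ((∫ x in (0 : ℝ)..1, x ^ ((1 / 2 : ℝ) - 1) * (1 - x) ^ μ : ℝ) : ℂ) := by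
    rw [Complex.betaIntegral, ← intervalIntegral.integral_ofReal]
    refine intervalIntegral.integral_congr fun x hx => ?_
    rw [Set.uIcc_of_le zero_le_one] at hx
    have h3 : (0 : ℝ) ≤ 1 - x := by linarith [hx.2]
    simp only [Complex.ofReal_mul]
    rw [Complex.ofReal_cpow hx.1, Complex.ofReal_cpow h3]
    push_cast
    congr 2
    ring
  rw [h1, ProbabilityTheory.beta_eq_betaIntegralReal _ _ (by norm_num) (by linarith), h2,
    Complex.ofReal_re]
  rw [intervalIntegral.integral_of_le zero_le_one, intervalIntegral.integral_of_le zero_le_one]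
  have key := integral_comp_rpow_Ioi
    ((Set.Ioc (0 : ℝ) 1).indicator fun x => x ^ ((1 / 2 : ℝ) - 1) * (1 - x) ^ μ)
    (p := 2) two_ne_zero
  have hsub : Set.Ioc (0 : ℝ) 1 ⊆ Set.Ioi 0 := fun x hx => hx.1
  rw [setIntegral_indicator measurableSet_Ioc, Set.inter_eq_self_of_subset_right hsub] at key
  rw [← key, ← integral_const_mul,
    ← Set.inter_eq_self_of_subset_right hsub, ← setIntegral_indicator measurableSet_Ioc]
  refine setIntegral_congr_fun measurableSet_Ioi fun x hx => ?_
  have hx0 : (0 : ℝ) < x := hx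
  simp only [Set.inter_eq_self_of_subset_right hsub]
  by_cases hx1 : x ≤ 1
  · have hx2 : x ^ (2 : ℝ) ∈ Set.Ioc (0 : ℝ) 1 :=
      ⟨by positivity, Real.rpow_le_one hx0.le hx1 (by norm_num)⟩
    rw [Set.indicator_of_mem hx2, Set.indicator_of_mem (show x ∈ Set.Ioc (0 : ℝ) 1 from ⟨hx0, hx1⟩),
      ← Real.rpow_mul hx0.le, smul_eq_mul, Real.rpow_two, ← mul_assoc]
    congr 1
    rw [mul_assoc, ← Real.rpow_add hx0]
    norm_num
  · have hx2 : x ^ (2 : ℝ) ∉ Set.Ioc (0 : ℝ) 1 := by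
      intro h
      have := h.2
      rw [Real.rpow_two] at this
      nlinarith
    rw [Set.indicator_of_notMem hx2, Set.indicator_of_notMem (fun h => hx1 h.2), smul_zero]

/-- Trapezoid rule on one cell where the derivative oscillates by at most `ε`. -/
lemma cell_smooth {h h' : ℝ → ℝ} {a b ε : ℝ} (hab : a ≤ b)
    (hd : ∀ x ∈ Set.Icc a b, HasDerivAt h (h' x) x)
    (hosc : ∀ x ∈ Set.Icc a b, |h' x - h' a| ≤ ε) :
    (∫ x in a..b, h x) - (b - a) * ((h a + h b) / 2) ≤ ε * (b - a) ^ 2 := by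
  have bound : ∀ x ∈ Set.Icc a b, |h x - h a - h' a * (x - a)| ≤ ε * (x - a) := by
    intro x hx
    have := (convex_Icc a b).norm_image_sub_le_of_norm_hasDerivWithin_le
      (f := fun x => h x - h' a * x) (f' := fun x => h' x - h' a) (C := ε)
      (fun y hy => (((hd y hy).sub
        (by simpa using (hasDerivAt_id y).const_mul (h' a)))).hasDerivWithinAt)
      (fun y hy => hosc y hy) (Set.left_mem_Icc.2 hab) hx
    rw [Real.norm_eq_abs, Real.norm_eq_abs, abs_of_nonneg (by linarith [hx.1] : 0 ≤ x - a)] at this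
    convert this using 2
    ring
  have hc : ContinuousOn h (Set.Icc a b) := fun x hx => (hd x hx).continuousAt.continuousWithinAt
  have h1 : (∫ x in a..b, h x) ≤ ∫ x in a..b, (h a + (h' a + ε) * (x - a)) := by
    refine intervalIntegral.integral_mono_on hab (hc.intervalIntegrable_of_Icc hab)
      (Continuous.intervalIntegrable (by fun_prop) _ _) fun x hx => ?_
    linarith [(abs_le.1 (bound x hx)).2]
  have h2 : (∫ x in a..b, (h a + (h' a + ε) * (x - a))) =
      h a * (b - a) + (h' a + ε) * ((b - a) ^ 2 / 2) := by
    rw [intervalIntegral.integral_add (by simp) (Continuous.intervalIntegrable (by fun_prop) _ _),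
      intervalIntegral.integral_const_mul,
      intervalIntegral.integral_comp_sub_right (fun x => x) a, integral_id]
    simp
    ring
  have h3 := mul_le_mul_of_nonneg_left (abs_le.1 (bound b (Set.right_mem_Icc.2 hab))).1
    (sub_nonneg.2 hab)
  nlinarith

/-- Trapezoid rule on one cell for a decreasing function; no smoothness is needed. -/
lemma cell_antitone {h : ℝ → ℝ} {a b : ℝ} (hab : a ≤ b)
    (hm : AntitoneOn h (Set.Icc a b)) :
    (∫ x in a..b, h x) - (b - a) * ((h a + h b) / 2) ≤ (b - a) * ((h a - h b) / 2) := by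
  have h1 : (∫ x in a..b, h x) ≤ ∫ x in a..b, h a := by
    refine intervalIntegral.integral_mono_on hab
      (by rw [← Set.uIcc_of_le hab] at hm; exact hm.intervalIntegrable) (by simp) fun x hx => ?_
    exact hm (Set.left_mem_Icc.2 hab) hx hx.1
  rw [intervalIntegral.integral_const, smul_eq_mul] at h1
  linarith

/-- For a continuous decreasing function on `[0,1]`, continuously differentiable away from `1`, the
right Riemann sum with some number `n` of cells falls short of the integral, after multiplication
by `n`, by at most `(h 0 - h 1) / 2 + 2 * ε`. Here `(h 0 - h 1) / 2` is the difference between the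
trapezoid sum and the right-endpoint sum, and `2 * ε` bounds the rescaled trapezoid error. -/
lemma exists_riemann_error_le {h h' : ℝ → ℝ} (hm : AntitoneOn h (Set.Icc 0 1))
    (hc : ContinuousOn h (Set.Icc 0 1))
    (hd : ∀ x ∈ Set.Ico (0 : ℝ) 1, HasDerivAt h (h' x) x)
    (hd' : ContinuousOn h' (Set.Ico 0 1)) {ε : ℝ} (hε : 0 < ε) :
    ∃ n : ℕ, 1 ≤ n ∧ (n : ℝ) * (∫ x in (0 : ℝ)..1, h x) -
      ∑ k ∈ Finset.range n, h (((k : ℝ) + 1) / n) ≤ (h 0 - h 1) / 2 + 2 * ε := by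
  obtain ⟨r, hr0, hr1, hr⟩ : ∃ r : ℝ, 0 ≤ r ∧ r < 1 ∧ h r - h 1 ≤ ε := by
    obtain ⟨δ, hδ, H⟩ := Metric.continuousWithinAt_iff.1 (hc 1 (by simp)) ε hε
    refine ⟨max 0 (1 - δ / 2), le_max_left _ _, max_lt one_pos (by linarith), ?_⟩
    have hlt : max 0 (1 - δ / 2) < 1 := max_lt one_pos (by linarith)
    have := H (x := max 0 (1 - δ / 2)) ⟨le_max_left _ _, hlt.le⟩ (by
      rw [Real.dist_eq, abs_sub_comm, abs_of_nonneg (by linarith)]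
      linarith [le_max_right 0 (1 - δ / 2)])
    rw [Real.dist_eq] at this
    linarith [le_abs_self (h (max 0 (1 - δ / 2)) - h 1)]
  set s : ℝ := (1 + r) / 2 with hs
  have hsub : Set.Icc 0 s ⊆ Set.Ico (0 : ℝ) 1 := fun x hx => ⟨hx.1, by linarith [hx.2]⟩
  have huc := isCompact_Icc.uniformContinuousOn_of_continuous (hd'.mono hsub)
  obtain ⟨δ, hδ, H⟩ := Metric.uniformContinuousOn_iff.1 huc ε hε
  obtain ⟨m, hmn⟩ := exists_nat_one_div_lt (lt_min hδ (by linarith : 0 < s - r))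
  have hm1 := hmn.trans_le (min_le_left _ _)
  have hm2 := hmn.trans_le (min_le_right _ _)
  set n : ℕ := m + 1 with hn
  have hn0 : (0 : ℝ) < n := by positivity
  have hn' : (1 : ℝ) / (m + 1) = 1 / n := by rw [hn]; push_cast; rfl
  rw [hn'] at hm1 hm2
  set p : ℕ → ℝ := fun k => (k : ℝ) / n with hp
  have hp1 : ∀ k, p (k + 1) - p k = 1 / n := fun k => by simp only [hp]; push_cast; ring
  have hp0 : ∀ k, 0 ≤ p k := fun k => by positivity
  have hple : ∀ k ≤ n, p k ≤ 1 := fun k hk => by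
    rw [hp, div_le_one hn0]; exact_mod_cast hk
  have hinv : (0 : ℝ) < 1 / n := by positivity
  -- Truncating `h` at height `h r` makes the two kinds of cells obey one telescoping bound.
  have cell : ∀ k < n, n * (∫ x in p k..p (k + 1), h x) - (h (p k) + h (p (k + 1))) / 2 ≤
      ε / n + (min (h (p k)) (h r) - min (h (p (k + 1))) (h r)) / 2 := by
    intro k hk
    have hkk : p k ≤ p (k + 1) := by linarith [hp1 k]
    have hk1 := hple (k + 1) hk
    have hanti : h (p (k + 1)) ≤ h (p k) :=
      hm ⟨hp0 k, hple k hk.le⟩ ⟨hp0 _, hk1⟩ hkk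
    have hnn : (n : ℝ) * (1 / n) = 1 := by field_simp
    by_cases hks : p (k + 1) ≤ s
    · have hin : ∀ x ∈ Set.Icc (p k) (p (k + 1)), x ∈ Set.Icc 0 s :=
        fun x hx => ⟨(hp0 k).trans hx.1, hx.2.trans hks⟩
      have := cell_smooth (h := h) (h' := h') (ε := ε) hkk (fun x hx => hd x (hsub (hin x hx)))
        (fun x hx => by
          have := H x (hin x hx) (p k) (hin _ (Set.left_mem_Icc.2 hkk)) (by
            rw [Real.dist_eq, abs_of_nonneg (by linarith [hx.1])]
            linarith [hx.2, hp1 k])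
          rw [Real.dist_eq] at this
          exact this.le)
      rw [hp1] at this
      have h2 := mul_le_mul_of_nonneg_left this hn0.le
      have h3 : (n : ℝ) * ((∫ x in p k..p (k + 1), h x) - 1 / n * ((h (p k) + h (p (k + 1))) / 2))
          = n * (∫ x in p k..p (k + 1), h x) - (h (p k) + h (p (k + 1))) / 2 := by
        field_simp
      have h4 : (n : ℝ) * (ε * (1 / n) ^ 2) = ε / n := by field_simp
      have h5 : min (h (p (k + 1))) (h r) ≤ min (h (p k)) (h r) := min_le_min_right _ hanti
      rw [h3, h4] at h2
      linarith
    · push Not at hks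
      have hrk : r ≤ p k := by linarith [hp1 k]
      have := cell_antitone (h := h) hkk
        (hm.mono fun x hx => ⟨(hp0 k).trans hx.1, hx.2.trans hk1⟩)
      rw [hp1] at this
      have h2 := mul_le_mul_of_nonneg_left this hn0.le
      have h3 : (n : ℝ) * ((∫ x in p k..p (k + 1), h x) - 1 / n * ((h (p k) + h (p (k + 1))) / 2))
          = n * (∫ x in p k..p (k + 1), h x) - (h (p k) + h (p (k + 1))) / 2 := by
        field_simp
      have h4 : (n : ℝ) * (1 / n * ((h (p k) - h (p (k + 1))) / 2))
          = (h (p k) - h (p (k + 1))) / 2 := by field_simp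
      have h5 : h (p k) ≤ h r := hm ⟨hr0, hr1.le⟩ ⟨hp0 k, hple k hk.le⟩ hrk
      rw [min_eq_left h5, min_eq_left (hanti.trans h5)]
      rw [h3, h4] at h2
      have : 0 < ε / n := by positivity
      linarith
  have hpz : p 0 = 0 := by simp [hp]
  have hpn : p n = 1 := by simp only [hp]; field_simp
  have hint : ∑ k ∈ Finset.range n, (∫ x in p k..p (k + 1), h x) = ∫ x in (0 : ℝ)..1, h x := by
    rw [intervalIntegral.sum_integral_adjacent_intervals, hpz, hpn]
    intro k hk
    refine (hc.mono ?_).intervalIntegrable_of_Icc (by linarith [hp1 k])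
    exact fun x hx => ⟨(hp0 k).trans hx.1, hx.2.trans (hple (k + 1) hk)⟩
  have hsum := Finset.sum_le_sum fun k hk => cell k (Finset.mem_range.1 hk)
  have htel : ∑ k ∈ Finset.range n, (h (p k) - h (p (k + 1))) = h 0 - h 1 := by
    rw [Finset.sum_range_sub' (fun k => h (p k)), hpz, hpn]
  have htel2 : ∑ k ∈ Finset.range n, (min (h (p k)) (h r) - min (h (p (k + 1))) (h r)) =
      min (h 0) (h r) - min (h 1) (h r) := by
    rw [Finset.sum_range_sub' (fun k => min (h (p k)) (h r)), hpz, hpn]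
  have hL : ∑ k ∈ Finset.range n,
      (n * (∫ x in p k..p (k + 1), h x) - (h (p k) + h (p (k + 1))) / 2) =
      n * (∫ x in (0 : ℝ)..1, h x) - ∑ k ∈ Finset.range n, h (((k : ℝ) + 1) / n)
        - (h 0 - h 1) / 2 := by
    rw [← hint, ← htel, Finset.mul_sum, Finset.sum_div, ← Finset.sum_sub_distrib,
      ← Finset.sum_sub_distrib]
    refine Finset.sum_congr rfl fun k _ => ?_
    have : p (k + 1) = ((k : ℝ) + 1) / n := by simp only [hp]; push_cast; rfl
    rw [← this]
    ring
  rw [hL, Finset.sum_add_distrib, ← Finset.sum_div _ _ (2 : ℝ), htel2, Finset.sum_const, Finset.card_range,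
    nsmul_eq_mul, mul_div_cancel₀ _ hn0.ne'] at hsum
  have h1r : h 1 ≤ h r := hm ⟨hr0, hr1.le⟩ (by simp) hr1.le
  rw [min_eq_left h1r] at hsum
  refine ⟨n, by omega, ?_⟩
  linarith [min_le_right (h 0) (h r)]

/-- At an integer `A = n` the sum in `fMu` is a Riemann sum of `x ↦ (1 - x²)^μ`. -/
lemma fMu_natCast (μ : ℝ) (hμ : 0 < μ) (n : ℕ) (hn : 1 ≤ n) :
    fMu μ n = (n : ℝ) * (∫ x in (0 : ℝ)..1, (1 - x ^ 2) ^ μ) -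
      ∑ k ∈ Finset.range n, (1 - (((k : ℝ) + 1) / n) ^ 2) ^ μ := by
  have hn0 : (0 : ℝ) < n := by exact_mod_cast hn
  unfold fMu
  rw [eulerBeta_eq_integral μ hμ, tsum_eq_sum (s := Finset.range n)]
  · congr 1
    · ring
    · refine Finset.sum_congr rfl fun k hk => ?_
      have hk' : (k : ℝ) + 1 ≤ n := by exact_mod_cast Finset.mem_range.1 hk
      rw [← div_pow, max_eq_left]
      have : ((k : ℝ) + 1) / n ≤ 1 := (div_le_one hn0).2 hk'
      have : (0 : ℝ) ≤ ((k : ℝ) + 1) / n := by positivity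
      nlinarith
  · intro k hk
    have hk' : (n : ℝ) ≤ k := by exact_mod_cast not_lt.1 (fun h => hk (Finset.mem_range.2 h))
    have : 1 ≤ ((k : ℝ) + 1) / n := (one_le_div hn0).2 (by linarith)
    rw [← div_pow, max_eq_right (by nlinarith), Real.zero_rpow hμ.ne']

/-- At suitable integers `f_μ` is at most `1/2` up to an arbitrarily small error. -/
lemma exists_fMu_le (μ : ℝ) (hμ : 0 < μ) {ε : ℝ} (hε : 0 < ε) :
    ∃ n : ℕ, 1 ≤ n ∧ fMu μ n ≤ 1 / 2 + 2 * ε := by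
  obtain ⟨n, hn, H⟩ := exists_riemann_error_le (h := fun x : ℝ => (1 - x ^ 2) ^ μ)
    (h' := fun x : ℝ => -(2 * x) * μ * (1 - x ^ 2) ^ (μ - 1))
    (fun x hx y hy hxy => Real.rpow_le_rpow (by nlinarith [hy.1, hy.2])
      (by nlinarith [hx.1, hy.1]) hμ.le)
    (Continuous.continuousOn (Continuous.rpow_const (by fun_prop) fun _ => Or.inr hμ.le))
    (fun x hx => by
      have hb : HasDerivAt (fun x : ℝ => 1 - x ^ 2) (-(2 * x)) x := by
        simpa using (hasDerivAt_pow 2 x).const_sub 1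
      exact hb.rpow_const (Or.inl (by nlinarith [hx.1, hx.2])))
    (ContinuousOn.mul (by fun_prop) (ContinuousOn.rpow_const (by fun_prop) fun x hx =>
      Or.inl (by nlinarith [hx.1, hx.2]))) hε
  refine ⟨n, hn, ?_⟩
  rw [fMu_natCast μ hμ n hn]
  simpa [Real.zero_rpow hμ.ne'] using H

/-- For every `μ > 0`, `ε_μ := inf_{A ≥ 1} f_μ(A)` satisfies
`2·ε_μ ≤ min{1, B(1+μ, 1/2)}`. -/
theorem two_epsilonMu_le (μ : ℝ) (hμ : 0 < μ) :
    2 * sInf (fMu μ '' Set.Ici (1 : ℝ)) ≤ min 1 (eulerBeta (1 + μ) (1 / 2)) := by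
  by_cases hbdd : BddBelow (fMu μ '' Set.Ici (1 : ℝ))
  · have hle : ∀ n : ℕ, 1 ≤ n → sInf (fMu μ '' Set.Ici (1 : ℝ)) ≤ fMu μ n := fun n hn =>
      csInf_le hbdd ⟨n, by simpa using hn, rfl⟩
    refine le_min ?_ ?_
    · refine le_of_forall_pos_le_add fun ε hε => ?_
      obtain ⟨n, hn, H⟩ := exists_fMu_le μ hμ (show 0 < ε / 4 by positivity)
      linarith [hle n hn]
    · have h1 := hle 1 le_rfl
      rw [fMu_natCast μ hμ 1 le_rfl] at h1
      rw [eulerBeta_eq_integral μ hμ]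
      simp only [Nat.cast_one, one_mul, Finset.range_one, Finset.sum_singleton, Nat.cast_zero,
        zero_add, div_one, one_pow, sub_self, Real.zero_rpow hμ.ne', sub_zero] at h1
      linarith
  · -- In this case `sInf` takes its default value `0`, and `B(1+μ, 1/2) ≥ 0`.
    rw [Real.sInf_of_not_bddBelow hbdd, mul_zero]
    have hB : 0 ≤ eulerBeta (1 + μ) (1 / 2) :=
      (ProbabilityTheory.beta_pos (by linarith : 0 < 1 + μ) (by norm_num : (0 : ℝ) < 1 / 2)).le
    exact le_min zero_le_one hB
end

section
/- For every real A ≥ 1, one has ∑_{k=1}^∞ (1 - k²/A²)₊² ≤ (8/15)·A − 1.91/4; equivalently f₂(A) > 1.91/4 for all A ≥ 1 (note B(3, 1/2) = 16/15). This is the rigorous content of the numerical claim 1.91 < ν(3/2, 2). -/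
/-!
Write `n = ⌊A⌋₊` and `t = A - n ∈ [0, 1)`. Only the terms `k < n` are nonzero, so `A ^ 4` times the
sum is the polynomial `∑_{k=1}^n (A² - k²)²`. By Euler–Maclaurin (exact here, the summand being a
polynomial with a double zero at `A` and vanishing odd derivatives at `0`),
`∑_{k=1}^n (A² - k²)² = (8/15) A⁵ - A⁴/2 - ((4/3) B₃(t) A² - B₄(t) A + B₅(t)/5)`,
with `B_j` the Bernoulli polynomials (`sum_sq_sub_sq_sq`). The claim thus becomes
`(9/400) A⁴ + (4/3) B₃(t) A² - B₄(t) A + B₅(t)/5 ≥ 0`.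

For `A ≥ 2` crude bounds on the Bernoulli polynomials on `[0, 1]` suffice. For `1 ≤ A < 2`, where
the constant `1.91/4` is nearly attained (close to `A = 1.69`), the sum has the single term
`(1 - 1/A²)²`, and the resulting quintic is shown to be nonnegative by dividing it by
`(A - 169/100)²`.
-/

/-- Exact Euler–Maclaurin formula for `(A² - x²)²` with `A = n + t`; the three brackets are the
Bernoulli polynomials `B₃(t)`, `B₄(t)` and `B₅(t)`. -/
lemma sum_sq_sub_sq_sq (n : ℕ) (t : ℝ) :
    ∑ k ∈ Finset.range n, (((n : ℝ) + t) ^ 2 - ((k : ℝ) + 1) ^ 2) ^ 2 =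
      8 / 15 * (n + t) ^ 5 - (n + t) ^ 4 / 2
        - (4 / 3 * (t ^ 3 - 3 / 2 * t ^ 2 + t / 2) * (n + t) ^ 2
          - (t ^ 4 - 2 * t ^ 3 + t ^ 2 - 1 / 30) * (n + t)
          + (t ^ 5 - 5 / 2 * t ^ 4 + 5 / 3 * t ^ 3 - t / 6) / 5) := by
  -- The closed form must be valid for every `A`, not just `n + t`, for the induction to go through.
  have h : ∀ (m : ℕ) (A : ℝ), ∑ k ∈ Finset.range m, (A ^ 2 - ((k : ℝ) + 1) ^ 2) ^ 2 =
      m * A ^ 4 - A ^ 2 * (m * (m + 1) * (2 * m + 1) / 3)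
        + m * (m + 1) * (2 * m + 1) * (3 * m ^ 2 + 3 * m - 1) / 30 := by
    intro m A
    induction m with
    | zero => simp
    | succ m ih => rw [Finset.sum_range_succ, ih]; push_cast; ring
  rw [h]; ring

/-- The case `1 ≤ A ≤ 2`. The minimum of this quintic, near `A = 1.69`, is about `0.012`. -/
lemma quintic_nonneg {A : ℝ} (h1 : 1 ≤ A) (h2 : A ≤ 2) :
    0 ≤ 8 / 15 * A ^ 5 - 1.91 / 4 * A ^ 4 - (A ^ 2 - 1) ^ 2 := by
  have hq : 0 ≤ 8 / 15 * A ^ 3 + 1951 / 6000 * A ^ 2 - 42419 / 100000 * A - 21748243 / 60000000 := by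
    have h0 : 0 ≤ A - 1 := by linarith
    nlinarith [pow_nonneg h0 2, pow_nonneg h0 3]
  -- Euclidean division by `(A - 169/100)²`: the linear remainder is positive on `[1, 2]`.
  have e : 8 / 15 * A ^ 5 - 1.91 / 4 * A ^ 4 - (A ^ 2 - 1) ^ 2 =
      (A - 169 / 100) ^ 2 *
        (8 / 15 * A ^ 3 + 1951 / 6000 * A ^ 2 - 42419 / 100000 * A - 21748243 / 60000000)
      + (7338897503 / 600000000000 - 4086589 / 300000000 * (A - 169 / 100)) := by ring
  rw [e]
  exact add_nonneg (mul_nonneg (sq_nonneg _) hq) (by linarith)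

/-- The case `A ≥ 2`, with crude bounds on the Bernoulli polynomials. -/
lemma bernoulli_expr_nonneg {A t : ℝ} (hA : 2 ≤ A) (h0 : 0 ≤ t) (h1 : t ≤ 1) :
    0 ≤ 9 / 400 * A ^ 4 + (4 / 3 * (t ^ 3 - 3 / 2 * t ^ 2 + t / 2) * A ^ 2
          - (t ^ 4 - 2 * t ^ 3 + t ^ 2 - 1 / 30) * A
          + (t ^ 5 - 5 / 2 * t ^ 4 + 5 / 3 * t ^ 3 - t / 6) / 5) := by
  -- With `s = t - 1/2`: `B₃ = s³ - s/4`, `B₄ = (s² - 1/4)² - 1/30`, `B₅ = B₃ (s² - 7/12)`.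
  have hu0 : 0 ≤ t * (1 - t) := mul_nonneg h0 (by linarith)
  have hu1 : t * (1 - t) ≤ 1 / 4 := by nlinarith [sq_nonneg (t - 1 / 2)]
  have b3 : -(49 / 1000) ≤ t ^ 3 - 3 / 2 * t ^ 2 + t / 2 := by
    nlinarith [mul_nonneg h0 (sq_nonneg (t - 79 / 100)), sq_nonneg (t - 79 / 100)]
  have b3' : t ^ 3 - 3 / 2 * t ^ 2 + t / 2 ≤ 49 / 1000 := by
    nlinarith [mul_nonneg (sub_nonneg.2 h1) (sq_nonneg (t - 21 / 100)), sq_nonneg (t - 21 / 100)]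
  have b4 : t ^ 4 - 2 * t ^ 3 + t ^ 2 - 1 / 30 ≤ 3 / 100 := by
    nlinarith [mul_nonneg hu0 (sub_nonneg.2 hu1)]
  have b5 : -(3 / 100) ≤ t ^ 5 - 5 / 2 * t ^ 4 + 5 / 3 * t ^ 3 - t / 6 := by
    have e : t ^ 5 - 5 / 2 * t ^ 4 + 5 / 3 * t ^ 3 - t / 6 =
        -((t ^ 3 - 3 / 2 * t ^ 2 + t / 2) * (t * (1 - t) + 1 / 3)) := by ring
    rw [e]
    nlinarith [mul_nonneg (sub_nonneg.2 b3') (by linarith : 0 ≤ t * (1 - t) + 1 / 3)]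
  have c3 := mul_nonneg (sub_nonneg.2 b3) (sq_nonneg A)
  have c4 := mul_nonneg (sub_nonneg.2 b4) (by linarith : 0 ≤ A)
  have key : 0 ≤ 9 / 400 * A ^ 4 - 49 / 750 * A ^ 2 - 3 / 100 * A - 3 / 500 := by
    nlinarith [pow_nonneg (sub_nonneg.2 hA) 2, pow_nonneg (sub_nonneg.2 hA) 3,
      pow_nonneg (sub_nonneg.2 hA) 4]
  nlinarith

/-- For every `A ≥ 1` one has `∑_{k=1}^∞ (1 - k²/A²)₊² ≤ (8/15)·A − 1.91/4`
(note `B(3,1/2) = 16/15`, so `(A/2)·B(3,1/2) = (8/15)·A`); equivalently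
`f₂(A) > 1.91/4` for all `A ≥ 1`.  This is the rigorous content of the
numerical claim `1.91 < ν(3/2, 2)`. -/
theorem tsum_one_sub_sq_pos_part_sq_le (A : ℝ) (hA : 1 ≤ A) :
    (∑' k : ℕ, (max (1 - ((k : ℝ) + 1) ^ 2 / A ^ 2) 0) ^ 2) ≤
      (8 / 15) * A - 1.91 / 4 := by
  have hA0 : 0 < A := by linarith
  have hn : (⌊A⌋₊ : ℝ) ≤ A := Nat.floor_le hA0.le
  have hn' : A < ⌊A⌋₊ + 1 := Nat.lt_floor_add_one A
  have hsum : (∑' k : ℕ, (max (1 - ((k : ℝ) + 1) ^ 2 / A ^ 2) 0) ^ 2) =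
      (∑ k ∈ Finset.range ⌊A⌋₊, (A ^ 2 - ((k : ℝ) + 1) ^ 2) ^ 2) / A ^ 4 := by
    rw [tsum_eq_sum (s := Finset.range ⌊A⌋₊), Finset.sum_div]
    · refine Finset.sum_congr rfl fun k hk => ?_
      have hk' : (k : ℝ) + 1 ≤ ⌊A⌋₊ := by exact_mod_cast Finset.mem_range.1 hk
      rw [max_eq_left]
      · field_simp
      · rw [sub_nonneg, div_le_one (by positivity)]
        gcongr
        linarith
    · intro k hk
      have hk' : (⌊A⌋₊ : ℝ) ≤ k := by exact_mod_cast not_lt.1 (mt Finset.mem_range.2 hk)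
      rw [max_eq_right]
      · simp
      · rw [sub_nonpos, one_le_div (by positivity)]
        gcongr
        linarith
  rw [hsum, div_le_iff₀ (by positivity)]
  rcases lt_or_ge A 2 with h2 | h2
  · have hf : ⌊A⌋₊ = 1 := (Nat.floor_eq_iff hA0.le).2 ⟨by simpa using hA, by norm_num; exact h2⟩
    rw [hf]
    simp only [Finset.sum_range_one]
    norm_num
    have := quintic_nonneg hA h2.le
    norm_num at this
    linarith
  · have h := sum_sq_sub_sq_sq ⌊A⌋₊ (A - ⌊A⌋₊)
    simp only [add_sub_cancel] at h
    rw [h]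
    have := bernoulli_expr_nonneg h2 (sub_nonneg.2 hn) (by linarith : A - ⌊A⌋₊ ≤ 1)
    norm_num
    linarith
end
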